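/- arXiv:1510.00483 — 6 statements merged into one kernel-verified Lean document; each statement's English description precedes it below -/
import Mathlib

section
/- Let 𝒞 be a bicategory, X an object of 𝒞, (B, p, e) a monad on X, and A : X ⟶ X a 1-morphism. If (t, k) is a warping from (X, B) to A, then the 2-morphism m : (A ≫ B) ≫ (A ≫ B) ⟶ A ≫ B defined (up to the canonical coherence isomorphisms) as m = (A ◁ p) ∘ (t ▷ B), together with k : 𝟙 X ⟶ A ≫ B, satisfies the monad laws: m ∘ (m ▷ (A ≫ B)) = m ∘ ((A ≫ B) ◁ m), m ∘ (k ▷ (A ≫ B)) = 𝟙 (A ≫ B), and m ∘ ((A ≫ B) ◁ k) = 𝟙 (A ≫ B) (all up to the canonical associator and unitor isomorphisms). In other words, (A ≫ B, m, k) is a monad on X. -/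
/-!
The three laws for `m = (A ◁ p) ∘ (t ▷ B)` come from the warping axioms by whiskering with `B`.

* Associativity: whiskering (W1) with `B` turns `m ∘ (m ▷ (A ≫ B))` into a composite ending in
  `p ∘ (p ▷ B)`. Associativity of `p` replaces this by `p ∘ (B ◁ p)`, and the interchange law
  moves the inner `p` past `t`, giving `m ∘ ((A ≫ B) ◁ m)`.
* Left unit: whiskering (W3) with `B` reduces the law to `p ∘ (e ▷ B) = 𝟙 B`.
* Right unit: this is (W2).
-/

open CategoryTheory Bicategory
open scoped CategoryTheory.Bicategory

universe w v u

variable {C : Type u} [Bicategory.{w, v} C]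

/-- A monad structure on an endo-1-morphism `B : X ⟶ X` in a bicategory:
multiplication `p` and unit `e` satisfy associativity and the unit laws
up to the canonical associator and unitor isomorphisms. -/
def IsMonad {X : C} (B : X ⟶ X) (p : B ≫ B ⟶ B) (e : 𝟙 X ⟶ B) : Prop :=
  ((α_ B B B).hom ≫ (B ◁ p) ≫ p = (p ▷ B) ≫ p) ∧
  ((e ▷ B) ≫ p = (λ_ B).hom) ∧
  ((B ◁ e) ≫ p = (ρ_ B).hom)

/-- A warping from the monad `(X, B, p, e)` to an endo-1-morphism `A : X ⟶ X`:
2-morphisms `t : A ≫ B ≫ A ⟶ A ≫ B` and `k : 𝟙 X ⟶ A ≫ B` satisfying the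
three warping axioms (W1), (W2), (W3), up to the canonical coherence
isomorphisms (inserted by `⊗≫`). -/
def IsWarping {X : C} (B : X ⟶ X) (p : B ≫ B ⟶ B) (e : 𝟙 X ⟶ B) (A : X ⟶ X)
    (t : A ≫ B ≫ A ⟶ A ≫ B) (k : 𝟙 X ⟶ A ≫ B) : Prop :=
  (𝟙 (A ≫ B ≫ A ≫ B ≫ A) ⊗≫ ((t ▷ B) ▷ A) ⊗≫ (A ◁ (p ▷ A)) ⊗≫ t
      = 𝟙 (A ≫ B ≫ A ≫ B ≫ A) ⊗≫ ((A ≫ B) ◁ t) ⊗≫ (t ▷ B) ⊗≫ (A ◁ p)) ∧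
  (𝟙 (A ≫ B) ⊗≫ ((A ≫ B) ◁ k) ⊗≫ (t ▷ B) ⊗≫ (A ◁ p) = 𝟙 (A ≫ B)) ∧
  (𝟙 A ⊗≫ (k ▷ A) ⊗≫ t = 𝟙 A ⊗≫ (A ◁ e))

/-- If `(t, k)` is a warping from the monad `(X, B)` to `A`, then
`m = (A ◁ p) ∘ (t ▷ B)` (up to canonical coherence) together with `k` gives a
monad structure on the composite `A ≫ B`. -/
theorem warping_gives_monad_on_comp {X : C} (B A : X ⟶ X)
    (p : B ≫ B ⟶ B) (e : 𝟙 X ⟶ B) (hB : IsMonad B p e)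
    (t : A ≫ B ≫ A ⟶ A ≫ B) (k : 𝟙 X ⟶ A ≫ B)
    (hW : IsWarping B p e A t k)
    (m : (A ≫ B) ≫ (A ≫ B) ⟶ A ≫ B)
    (hm : m = 𝟙 ((A ≫ B) ≫ (A ≫ B)) ⊗≫ (t ▷ B) ⊗≫ (A ◁ p)) :
    IsMonad (A ≫ B) m k := by
  obtain ⟨hassoc, hunit, -⟩ := hB
  obtain ⟨h1, h2, h3⟩ := hW
  subst hm
  refine ⟨?_, ?_, ?_⟩
  · symm
    calc
      _ = 𝟙 _ ⊗≫ (𝟙 (A ≫ B ≫ A ≫ B ≫ A) ⊗≫ ((t ▷ B) ▷ A) ⊗≫ (A ◁ (p ▷ A)) ⊗≫ t) ▷ B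
            ⊗≫ A ◁ p := by bicategory
      _ = 𝟙 _ ⊗≫ (A ≫ B) ◁ t ▷ B ⊗≫ t ▷ B ▷ B ⊗≫ A ◁ (p ▷ B ≫ p) := by
        rw [h1]; bicategory
      _ = 𝟙 _ ⊗≫ (A ≫ B) ◁ t ▷ B ⊗≫ (t ▷ (B ≫ B) ≫ (A ≫ B) ◁ p) ⊗≫ A ◁ p := by
        rw [← hassoc]; bicategory
      _ = 𝟙 _ ⊗≫ (A ≫ B) ◁ t ▷ B ⊗≫ ((A ≫ B ≫ A) ◁ p ≫ t ▷ B) ⊗≫ A ◁ p := by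
        rw [whisker_exchange]
      _ = _ := by bicategory
  · calc
      _ = 𝟙 _ ⊗≫ (𝟙 A ⊗≫ (k ▷ A) ⊗≫ t) ▷ B ⊗≫ A ◁ p := by bicategory
      _ = 𝟙 _ ⊗≫ A ◁ (e ▷ B ≫ p) := by rw [h3]; bicategory
      _ = _ := by rw [hunit]; bicategory
  · calc
      _ = 𝟙 _ ⊗≫ (𝟙 (A ≫ B) ⊗≫ ((A ≫ B) ◁ k) ⊗≫ (t ▷ B) ⊗≫ (A ◁ p)) := by bicategory
      _ = _ := by rw [h2]; bicategory
end

section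
/- Let 𝒞 be a bicategory, X an object of 𝒞, (B, p, e) a monad on X, A : X ⟶ X a 1-morphism, and (t, k) a warping from (X, B) to A. Let m = (A ◁ p) ∘ (t ▷ B) be the induced monad multiplication on A ≫ B and let φ : B ⟶ A ≫ B be the 2-morphism defined (up to the canonical coherence isomorphisms) as φ = (A ◁ p) ∘ (e ▷ B). Then φ is a monoid morphism from (B, p, e) to (A ≫ B, m, k): that is, φ ∘ p = m ∘ (φ □ φ) where φ □ φ = (φ ▷ (A ≫ B)) ∘ (B ◁ φ) : B ≫ B ⟶ (A ≫ B) ≫ (A ≫ B) is the horizontal composite of φ with itself, and φ ∘ e = k. -/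
/-!
In generalised-element notation, write `r = A ◁ p` for the right action of `B` on `A ≫ B`, so
that `φ b = r (k, b)`. Associativity of `p` gives `m (x, r (y, b)) = r (m (x, y), b)`, and (W2)
says that `k` is a right unit for `m`. Therefore
`m (φ b, φ c) = m (φ b, r (k, c)) = r (m (φ b, k), c) = r (φ b, c) = r (r (k, b), c)`,
and by associativity of `p` this is `r (k, p (b, c)) = φ (p (b, c))`. The equation
`φ ∘ e = k` is the right unit law of `p`, which says that `r (k, e) = k`.
-/

open CategoryTheory Bicategory
open scoped CategoryTheory.Bicategory

universe w v u

variable {C : Type u} [Bicategory.{w, v} C]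

/-- The comparison 2-morphism `φ : B ⟶ A ≫ B`, written `(A ◁ p) ∘ (e ▷ B)` in the paper,
where `e` there denotes the unit `𝟙 X ⟶ A ≫ B` of the induced monad on `A ≫ B`
(here `k`, the unit part of the warping): it is the composite
`B ≅ 𝟙 X ≫ B ⟶ (A ≫ B) ≫ B ≅ A ≫ (B ≫ B) ⟶ A ≫ B`. -/
def warpPhi {X : C} (B : X ⟶ X) (p : B ≫ B ⟶ B) (A : X ⟶ X)
    (k : 𝟙 X ⟶ A ≫ B) : B ⟶ A ≫ B :=
  𝟙 B ⊗≫ (k ▷ B) ⊗≫ (A ◁ p)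

section

variable {X : C} {A B : X ⟶ X} {p : B ≫ B ⟶ B} {e : 𝟙 X ⟶ B}

/-- The right action `A ◁ p` of `B` on `A ≫ B` is associative. -/
lemma rightAction_assoc (hp : (α_ B B B).hom ≫ (B ◁ p) ≫ p = (p ▷ B) ≫ p) :
    ((A ≫ B) ◁ p) ⊗≫ (A ◁ p) = 𝟙 ((A ≫ B) ≫ B ≫ B) ⊗≫ ((A ◁ p) ▷ B) ⊗≫ (A ◁ p) := by
  calc
    _ = 𝟙 _ ⊗≫ A ◁ ((α_ B B B).hom ≫ (B ◁ p) ≫ p) := by bicategory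
    _ = 𝟙 _ ⊗≫ A ◁ ((p ▷ B) ≫ p) := by rw [hp]
    _ = _ := by bicategory

/-- The 2-morphism `φ` is right `B`-linear, where `B` acts on itself by `p`. -/
lemma mul_comp_warpPhi (hp : (α_ B B B).hom ≫ (B ◁ p) ≫ p = (p ▷ B) ≫ p)
    (k : 𝟙 X ⟶ A ≫ B) :
    p ≫ warpPhi B p A k = (warpPhi B p A k ▷ B) ⊗≫ (A ◁ p) := by
  calc
    _ = 𝟙 _ ⊗≫ ((𝟙 X ◁ p) ≫ (k ▷ B)) ⊗≫ (A ◁ p) := by rw [warpPhi]; bicategory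
    _ = 𝟙 _ ⊗≫ (k ▷ (B ≫ B)) ⊗≫ (((A ≫ B) ◁ p) ⊗≫ (A ◁ p)) := by
      rw [whisker_exchange]; bicategory
    _ = _ := by rw [rightAction_assoc hp, warpPhi]; bicategory

/-- The unit law `r (k, e) = k`, where `r = A ◁ p` is the right action of `B` on `A ≫ B`. -/
lemma unit_comp_warpPhi (he : (B ◁ e) ≫ p = (ρ_ B).hom) (k : 𝟙 X ⟶ A ≫ B) :
    e ≫ warpPhi B p A k = k := by
  calc
    _ = 𝟙 _ ⊗≫ ((𝟙 X ◁ e) ≫ (k ▷ B)) ⊗≫ (A ◁ p) := by rw [warpPhi]; bicategory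
    _ = 𝟙 _ ⊗≫ (k ▷ 𝟙 X) ⊗≫ (A ◁ ((B ◁ e) ≫ p)) := by
      rw [whisker_exchange]; bicategory
    _ = _ := by rw [he]; bicategory

/-- The multiplication `m = (A ◁ p) ∘ (t ▷ B)` is right `B`-linear in its second argument:
`m (x, r (y, b)) = r (m (x, y), b)`. -/
lemma warpMul_rightAction (hp : (α_ B B B).hom ≫ (B ◁ p) ≫ p = (p ▷ B) ≫ p)
    (t : A ≫ B ≫ A ⟶ A ≫ B) :
    ((A ≫ B) ◁ (A ◁ p)) ⊗≫ (t ▷ B) ⊗≫ (A ◁ p) =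
      𝟙 ((A ≫ B) ≫ A ≫ B ≫ B) ⊗≫ ((t ▷ B) ▷ B) ⊗≫ ((A ◁ p) ▷ B) ⊗≫ (A ◁ p) := by
  calc
    _ = 𝟙 _ ⊗≫ (((A ≫ B ≫ A) ◁ p) ≫ (t ▷ B)) ⊗≫ (A ◁ p) := by bicategory
    _ = 𝟙 _ ⊗≫ (t ▷ (B ≫ B)) ⊗≫ (((A ≫ B) ◁ p) ⊗≫ (A ◁ p)) := by
      rw [whisker_exchange]; bicategory
    _ = _ := by rw [rightAction_assoc hp]; bicategory

end

/-- For a warping `(t, k)` with induced multiplication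
`m = (A ◁ p) ∘ (t ▷ B)` on `A ≫ B`, the 2-morphism `φ : B ⟶ A ≫ B` is a monoid
morphism from `(B, p, e)` to `(A ≫ B, m, k)`. -/
theorem warpPhi_is_monoid_hom {X : C} (B A : X ⟶ X)
    (p : B ≫ B ⟶ B) (e : 𝟙 X ⟶ B) (hB : IsMonad B p e)
    (t : A ≫ B ≫ A ⟶ A ≫ B) (k : 𝟙 X ⟶ A ≫ B)
    (hW : IsWarping B p e A t k)
    (m : (A ≫ B) ≫ (A ≫ B) ⟶ A ≫ B)
    (hm : m = 𝟙 ((A ≫ B) ≫ (A ≫ B)) ⊗≫ (t ▷ B) ⊗≫ (A ◁ p)) :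
    p ≫ warpPhi B p A k
        = ((B ◁ warpPhi B p A k) ≫ (warpPhi B p A k ▷ (A ≫ B))) ≫ m ∧
    e ≫ warpPhi B p A k = k := by
  obtain ⟨hp, -, he⟩ := hB
  obtain ⟨-, hk, -⟩ := hW
  refine ⟨?_, unit_comp_warpPhi he k⟩
  rw [mul_comp_warpPhi hp, whisker_exchange, hm]
  symm
  calc
    -- Only the second occurrence of `φ` is expanded, as `φ c = r (k, c)`.
    _ = (warpPhi B p A k ▷ B) ⊗≫ ((A ≫ B) ◁ (k ▷ B)) ⊗≫
          (((A ≫ B) ◁ (A ◁ p)) ⊗≫ (t ▷ B) ⊗≫ (A ◁ p)) := by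
      generalize warpPhi B p A k ▷ B = f
      rw [warpPhi]
      bicategory
    _ = (warpPhi B p A k ▷ B) ⊗≫
          ((𝟙 (A ≫ B) ⊗≫ ((A ≫ B) ◁ k) ⊗≫ (t ▷ B) ⊗≫ (A ◁ p)) ▷ B) ⊗≫ (A ◁ p) := by
      rw [warpMul_rightAction hp]
      bicategory
    _ = _ := by
      rw [hk]
      bicategory
end

section
/- Let 𝒞 be a bicategory, X an object of 𝒞, (B, p, e) a monad on X, A : X ⟶ X a 1-morphism, and (t, k) a warping from (X, B) to A. Then the 2-morphisms d := t ∘ (A ◁ p ▷ A) ∘ (k ▷ (B ≫ A)) : B ≫ A ⟶ A ≫ B, q := t ∘ (A ◁ e ▷ A) : A ≫ A ⟶ A ≫ B, and j := k : 𝟙 X ⟶ A ≫ B form a wreath from (X, B) to A, i.e. they satisfy all seven wreath axioms (X1)–(X7) (up to the canonical coherence isomorphisms of 𝒞). -/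
/-!
A warping `(t, k)` makes the free right `B`-module `M = A ≫ B` into a monad: its multiplication
`mul p t : M ≫ M ⟶ M` is the right `B`-linear extension of `t`, (W1) gives associativity
(`mul_assoc'`), (W2) the right unit law (`mul_unit`) and (W3) the left unit law (`unit_mul`),
with unit `k`. There is a multiplicative map `φ : B ⟶ M`, got by letting `B` act on `k`
(`phi_mprod_phi`), and the inclusion `ι = A ◁ e : A ⟶ M`.

Writing `f ⋆ g` for the product of generalized elements `f : P ⟶ M`, `g : Q ⟶ M`, the wreath
data are `d = φ ⋆ ι` and `q = ι ⋆ ι`. Right `B`-linearity of the multiplication (`act_mprod`) and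
`ι · B = 𝟙` identify the right `B`-linear extension of `f ⋆ ι` with `f ⋆ 𝟙`, and
`f ⋆ φ = f · B` (`mprod_phi`) gives `ι ⋆ φ = 𝟙`; so every wreath axiom becomes an instance of
associativity or of a unit law in `M`, or the compatibility of `φ` with the monad structures.
-/

open CategoryTheory Bicategory
open scoped CategoryTheory.Bicategory

universe w v u

variable {C : Type u} [Bicategory.{w, v} C]

/-- A wreath from the monad `(X, B, p, e)` to an endo-1-morphism `A : X ⟶ X`:
2-morphisms `d : B ≫ A ⟶ A ≫ B`, `q : A ≫ A ⟶ A ≫ B`, `j : 𝟙 X ⟶ A ≫ B`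
satisfying the seven wreath axioms (X1)–(X7), up to the canonical coherence
isomorphisms (inserted by `⊗≫`). -/
def IsWreath {X : C} (B : X ⟶ X) (p : B ≫ B ⟶ B) (e : 𝟙 X ⟶ B) (A : X ⟶ X)
    (d : B ≫ A ⟶ A ≫ B) (q : A ≫ A ⟶ A ≫ B) (j : 𝟙 X ⟶ A ≫ B) : Prop :=
  -- (X1)
  (𝟙 (B ≫ B ≫ A) ⊗≫ (p ▷ A) ⊗≫ d
      = 𝟙 (B ≫ B ≫ A) ⊗≫ (B ◁ d) ⊗≫ (d ▷ B) ⊗≫ (A ◁ p)) ∧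
  -- (X2)
  (𝟙 A ⊗≫ (e ▷ A) ⊗≫ d = 𝟙 A ⊗≫ (A ◁ e)) ∧
  -- (X3)
  (𝟙 (B ≫ A ≫ A) ⊗≫ (d ▷ A) ⊗≫ (A ◁ d) ⊗≫ (q ▷ B) ⊗≫ (A ◁ p)
      = 𝟙 (B ≫ A ≫ A) ⊗≫ (B ◁ q) ⊗≫ (d ▷ B) ⊗≫ (A ◁ p)) ∧
  -- (X4)
  (𝟙 B ⊗≫ (B ◁ j) ⊗≫ (d ▷ B) ⊗≫ (A ◁ p)
      = 𝟙 B ⊗≫ (j ▷ B) ⊗≫ (A ◁ p)) ∧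
  -- (X5)
  (𝟙 (A ≫ A ≫ A) ⊗≫ (A ◁ q) ⊗≫ (q ▷ B) ⊗≫ (A ◁ p)
      = 𝟙 (A ≫ A ≫ A) ⊗≫ (q ▷ A) ⊗≫ (A ◁ d) ⊗≫ (q ▷ B) ⊗≫ (A ◁ p)) ∧
  -- (X6)
  (𝟙 A ⊗≫ (A ◁ j) ⊗≫ (q ▷ B) ⊗≫ (A ◁ p) = 𝟙 A ⊗≫ (A ◁ e)) ∧
  -- (X7)
  (𝟙 A ⊗≫ (j ▷ A) ⊗≫ (A ◁ d) ⊗≫ (q ▷ B) ⊗≫ (A ◁ p) = 𝟙 A ⊗≫ (A ◁ e))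

namespace WarpingWreath

variable {X : C}

/-! ### Products of generalized elements -/

/-- The product `f ⋆ g : P ≫ Q ⟶ M` of two generalized elements `f : P ⟶ M`, `g : Q ⟶ M`
of a 1-morphism `M` equipped with a binary operation `m`. -/
def mprod {M P Q : X ⟶ X} (m : M ≫ M ⟶ M) (f : P ⟶ M) (g : Q ⟶ M) : P ≫ Q ⟶ M :=
  f ▷ Q ≫ M ◁ g ≫ m

lemma mprod_precomp {M P Q P' Q' : X ⟶ X} (m : M ≫ M ⟶ M) (f : P ⟶ M) (g : Q ⟶ M)
    (a : P' ⟶ P) (b : Q' ⟶ Q) :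
    mprod m (a ≫ f) (b ≫ g) = a ▷ Q' ≫ P ◁ b ≫ mprod m f g := by
  simp only [mprod, comp_whiskerRight, whiskerLeft_comp, Category.assoc]
  rw [← whisker_exchange_assoc f b]

lemma mprod_precomp_left {M P Q P' : X ⟶ X} (m : M ≫ M ⟶ M) (f : P ⟶ M) (g : Q ⟶ M)
    (a : P' ⟶ P) : mprod m (a ≫ f) g = a ▷ Q ≫ mprod m f g := by
  simp [mprod]

lemma mprod_precomp_right {M P Q Q' : X ⟶ X} (m : M ≫ M ⟶ M) (f : P ⟶ M) (g : Q ⟶ M)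
    (b : Q' ⟶ Q) : mprod m f (b ≫ g) = P ◁ b ≫ mprod m f g := by
  simpa using mprod_precomp m f g (𝟙 P) b

lemma mprod_assoc {M P Q R : X ⟶ X} (m : M ≫ M ⟶ M)
    (hm : m ▷ M ≫ m = (α_ M M M).hom ≫ M ◁ m ≫ m)
    (f : P ⟶ M) (g : Q ⟶ M) (h : R ⟶ M) :
    mprod m (mprod m f g) h = (α_ P Q R).hom ≫ mprod m f (mprod m g h) := by
  calc mprod m (mprod m f g) h
      = 𝟙 _ ⊗≫ f ▷ Q ▷ R ⊗≫ M ◁ g ▷ R ⊗≫ (m ▷ R ≫ M ◁ h) ⊗≫ m := by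
        simp only [mprod]; bicategory
    _ = 𝟙 _ ⊗≫ f ▷ Q ▷ R ⊗≫ M ◁ g ▷ R ⊗≫ (M ≫ M) ◁ h ⊗≫ (m ▷ M ≫ m) := by
        rw [← whisker_exchange]; bicategory
    _ = (α_ P Q R).hom ≫ mprod m f (mprod m g h) := by
        rw [hm]; simp only [mprod]; bicategory

lemma mprod_one {M P : X ⟶ X} (m : M ≫ M ⟶ M) (k : 𝟙 X ⟶ M)
    (hk : M ◁ k ≫ m = (ρ_ M).hom) (f : P ⟶ M) : mprod m f k = (ρ_ P).hom ≫ f := by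
  simp [mprod, hk]

lemma one_mprod {M P : X ⟶ X} (m : M ≫ M ⟶ M) (k : 𝟙 X ⟶ M)
    (hk : k ▷ M ≫ m = (λ_ M).hom) (f : P ⟶ M) : mprod m k f = (λ_ P).hom ≫ f := by
  rw [mprod, ← whisker_exchange_assoc, hk]; simp

/-! ### The free right `B`-module on `A` -/

/-- The right action `f · B : P ≫ B ⟶ A ≫ B` of `B` on generalized elements of the
free right `B`-module `A ≫ B`. -/
def act {A B P : X ⟶ X} (p : B ≫ B ⟶ B) (f : P ⟶ A ≫ B) : P ≫ B ⟶ A ≫ B :=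
  f ▷ B ≫ (α_ A B B).hom ≫ A ◁ p

lemma act_precomp {A B P P' : X ⟶ X} (p : B ≫ B ⟶ B) (f : P ⟶ A ≫ B) (a : P' ⟶ P) :
    act p (a ≫ f) = a ▷ B ≫ act p f := by
  simp [act]

lemma act_act {A B P : X ⟶ X} {p : B ≫ B ⟶ B} {e : 𝟙 X ⟶ B} (hB : IsMonad B p e)
    (f : P ⟶ A ≫ B) :
    act p (act p f) = (α_ P B B).hom ≫ P ◁ p ≫ act p f := by
  calc act p (act p f) = 𝟙 _ ⊗≫ f ▷ B ▷ B ⊗≫ A ◁ (p ▷ B ≫ p) := by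
        simp only [act]; bicategory
    _ = 𝟙 _ ⊗≫ (f ▷ (B ≫ B) ≫ (A ≫ B) ◁ p) ⊗≫ A ◁ p := by
        rw [← hB.1]; bicategory
    _ = (α_ P B B).hom ≫ P ◁ p ≫ act p f := by
        rw [← whisker_exchange]; simp only [act]; bicategory

lemma act_unit {A B P : X ⟶ X} {p : B ≫ B ⟶ B} {e : 𝟙 X ⟶ B} (hB : IsMonad B p e)
    (f : P ⟶ A ≫ B) : P ◁ e ≫ act p f = (ρ_ P).hom ≫ f := by
  calc P ◁ e ≫ act p f = (P ◁ e ≫ f ▷ B) ⊗≫ A ◁ p := by simp only [act]; bicategory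
    _ = 𝟙 _ ⊗≫ f ⊗≫ A ◁ (B ◁ e ≫ p) := by rw [whisker_exchange]; bicategory
    _ = (ρ_ P).hom ≫ f := by rw [hB.2.2]; bicategory

/-- The inclusion `ι = A ◁ e` of `A` into the free right `B`-module `A ≫ B`. -/
def incl {B : X ⟶ X} (e : 𝟙 X ⟶ B) (A : X ⟶ X) : A ⟶ A ≫ B := (ρ_ A).inv ≫ A ◁ e

lemma act_incl {A B : X ⟶ X} {p : B ≫ B ⟶ B} {e : 𝟙 X ⟶ B} (hB : IsMonad B p e) :
    act p (incl e A) = 𝟙 (A ≫ B) := by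
  calc act p (incl e A) = 𝟙 _ ⊗≫ A ◁ (e ▷ B ≫ p) := by simp only [act, incl]; bicategory
    _ = 𝟙 (A ≫ B) := by rw [hB.2.1]; bicategory

/-! ### The monad structure on `A ≫ B` -/

/-- The multiplication on `A ≫ B` induced by a warping: the right `B`-linear extension of `t`. -/
def mul {A B : X ⟶ X} (p : B ≫ B ⟶ B) (t : A ≫ B ≫ A ⟶ A ≫ B) :
    (A ≫ B) ≫ (A ≫ B) ⟶ A ≫ B :=
  𝟙 _ ⊗≫ t ▷ B ⊗≫ A ◁ p

/-- The multiplication on `A ≫ B` is right `B`-linear. -/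
lemma act_mprod {A B P Q : X ⟶ X} {p : B ≫ B ⟶ B} {e : 𝟙 X ⟶ B} (hB : IsMonad B p e)
    (t : A ≫ B ≫ A ⟶ A ≫ B) (f : P ⟶ A ≫ B) (g : Q ⟶ A ≫ B) :
    act p (mprod (mul p t) f g) = (α_ P Q B).hom ≫ mprod (mul p t) f (act p g) := by
  calc act p (mprod (mul p t) f g)
      = 𝟙 _ ⊗≫ f ▷ Q ▷ B ⊗≫ (A ≫ B) ◁ g ▷ B ⊗≫ t ▷ B ▷ B ⊗≫ A ◁ (p ▷ B ≫ p) := by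
        simp only [act, mprod, mul]; bicategory
    _ = 𝟙 _ ⊗≫ f ▷ Q ▷ B ⊗≫ (A ≫ B) ◁ g ▷ B ⊗≫ (t ▷ (B ≫ B) ≫ (A ≫ B) ◁ p) ⊗≫ A ◁ p := by
        rw [← hB.1]; bicategory
    _ = (α_ P Q B).hom ≫ mprod (mul p t) f (act p g) := by
        rw [← whisker_exchange]; simp only [act, mprod, mul]; bicategory

/-- The product of `f` with the inclusion of `A` is `t ∘ (f ▷ A)`; with `f = 𝟙` this recovers `t`
from the multiplication. -/
lemma mprod_incl {A B P : X ⟶ X} {p : B ≫ B ⟶ B} {e : 𝟙 X ⟶ B} (hB : IsMonad B p e)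
    (t : A ≫ B ≫ A ⟶ A ≫ B) (f : P ⟶ A ≫ B) :
    mprod (mul p t) f (incl e A) = f ▷ A ≫ (α_ A B A).hom ≫ t := by
  calc mprod (mul p t) f (incl e A)
      = 𝟙 _ ⊗≫ f ▷ A ⊗≫ ((A ≫ B ≫ A) ◁ e ≫ t ▷ B) ⊗≫ A ◁ p := by
        simp only [mprod, mul, incl]; bicategory
    _ = 𝟙 _ ⊗≫ f ▷ A ⊗≫ t ⊗≫ A ◁ (B ◁ e ≫ p) := by rw [whisker_exchange]; bicategory
    _ = f ▷ A ≫ (α_ A B A).hom ≫ t := by rw [hB.2.2]; bicategory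

section

variable {A B : X ⟶ X} {p : B ≫ B ⟶ B} {e : 𝟙 X ⟶ B} {t : A ≫ B ≫ A ⟶ A ≫ B}
  {k : 𝟙 X ⟶ A ≫ B}

/-- Axiom (W1), extended right `B`-linearly, is associativity of the multiplication. -/
lemma mul_assoc' (hB : IsMonad B p e) (hW : IsWarping B p e A t k) :
    mul p t ▷ (A ≫ B) ≫ mul p t
      = (α_ (A ≫ B) (A ≫ B) (A ≫ B)).hom ≫ (A ≫ B) ◁ mul p t ≫ mul p t := by
  calc mul p t ▷ (A ≫ B) ≫ mul p t
      = 𝟙 _ ⊗≫ (𝟙 (A ≫ B ≫ A ≫ B ≫ A) ⊗≫ ((t ▷ B) ▷ A) ⊗≫ (A ◁ (p ▷ A)) ⊗≫ t) ▷ B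
          ⊗≫ A ◁ p := by
        simp only [mul]; bicategory
    _ = 𝟙 _ ⊗≫ (A ≫ B) ◁ t ▷ B ⊗≫ t ▷ B ▷ B ⊗≫ A ◁ (p ▷ B ≫ p) := by
        rw [hW.1]; bicategory
    _ = 𝟙 _ ⊗≫ (A ≫ B) ◁ t ▷ B ⊗≫ (t ▷ (B ≫ B) ≫ (A ≫ B) ◁ p) ⊗≫ A ◁ p := by
        rw [← hB.1]; bicategory
    _ = _ := by
        rw [← whisker_exchange]; simp only [mul]; bicategory

lemma mul_unit (hW : IsWarping B p e A t k) :
    (A ≫ B) ◁ k ≫ mul p t = (ρ_ (A ≫ B)).hom := by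
  calc (A ≫ B) ◁ k ≫ mul p t
      = (ρ_ (A ≫ B)).hom ≫ (𝟙 (A ≫ B) ⊗≫ ((A ≫ B) ◁ k) ⊗≫ (t ▷ B) ⊗≫ (A ◁ p)) := by
        simp only [mul]; bicategory
    _ = _ := by rw [hW.2.1, Category.comp_id]

/-- The right `B`-linear extension of axiom (W3): both sides of the unit law are `B`-linear and
agree on `A`. -/
lemma unit_mul (hB : IsMonad B p e) (hW : IsWarping B p e A t k) :
    k ▷ (A ≫ B) ≫ mul p t = (λ_ (A ≫ B)).hom := by
  calc k ▷ (A ≫ B) ≫ mul p t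
      = 𝟙 _ ⊗≫ (𝟙 A ⊗≫ (k ▷ A) ⊗≫ t) ▷ B ⊗≫ A ◁ p := by
        simp only [mul]; bicategory
    _ = 𝟙 _ ⊗≫ A ◁ (e ▷ B ≫ p) := by rw [hW.2.2]; bicategory
    _ = _ := by rw [hB.2.1]; bicategory

/-! ### The map `φ` of monads from `B` to `A ≫ B` -/

/-- The 2-morphism `φ : B ⟶ A ≫ B` obtained by letting `B` act on the unit `k`. -/
def phi (p : B ≫ B ⟶ B) (k : 𝟙 X ⟶ A ≫ B) : B ⟶ A ≫ B := (λ_ B).inv ≫ act p k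

lemma unit_phi (hB : IsMonad B p e) : e ≫ phi p k = k := by
  have h := act_unit hB k
  rw [phi, leftUnitor_inv_naturality_assoc, h]
  bicategory

/-- Multiplying by `φ` on the right is acting by `B`: linearity moves the action off `k`, which is
then absorbed by the right unit law. -/
lemma mprod_phi (hB : IsMonad B p e) (hW : IsWarping B p e A t k) {P : X ⟶ X}
    (f : P ⟶ A ≫ B) : mprod (mul p t) f (phi p k) = act p f := by
  have h := act_mprod hB t f k
  rw [mprod_one _ _ (mul_unit hW), act_precomp] at h
  rw [phi, mprod_precomp_right, ← cancel_epi ((ρ_ P).hom ▷ B), h]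
  bicategory

/-- `φ` is multiplicative. -/
lemma phi_mprod_phi (hB : IsMonad B p e) (hW : IsWarping B p e A t k) :
    mprod (mul p t) (phi p k) (phi p k) = p ≫ phi p k := by
  rw [mprod_phi hB hW, phi, act_precomp, act_act hB, leftUnitor_inv_naturality_assoc]
  bicategory

end

end WarpingWreath

open WarpingWreath

/-! ### The wreath axioms -/

/-- A warping `(t, k)` from `(X, B)` to `A` gives rise to a wreath
`d := t ∘ (A ◁ p ▷ A) ∘ (k ▷ (B ≫ A))`, `q := t ∘ (A ◁ e ▷ A)`, `j := k`. -/
theorem warping_gives_wreath {X : C} (B A : X ⟶ X)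
    (p : B ≫ B ⟶ B) (e : 𝟙 X ⟶ B) (hB : IsMonad B p e)
    (t : A ≫ B ≫ A ⟶ A ≫ B) (k : 𝟙 X ⟶ A ≫ B)
    (hW : IsWarping B p e A t k)
    (d : B ≫ A ⟶ A ≫ B) (q : A ≫ A ⟶ A ≫ B)
    (hd : d = 𝟙 (B ≫ A) ⊗≫ (k ▷ (B ≫ A)) ⊗≫ (A ◁ (p ▷ A)) ⊗≫ t)
    (hq : q = 𝟙 (A ≫ A) ⊗≫ (A ◁ (e ▷ A)) ⊗≫ t) :
    IsWreath B p e A d q k := by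
  have hm := mul_assoc' hB hW
  have hi : ∀ {P : X ⟶ X} (f : P ⟶ A ≫ B), f ▷ A ⊗≫ t = mprod (mul p t) f (incl e A) := by
    intro P f
    rw [mprod_incl hB t]; bicategory
  have hd' : d = mprod (mul p t) (phi p k) (incl e A) := by
    rw [hd, ← hi]; simp only [phi, act]; bicategory
  have hq' : q = mprod (mul p t) (incl e A) (incl e A) := by
    rw [hq, ← hi]; simp only [incl]; bicategory
  -- Since `ι · B` is the identity, the `B`-linear extension of `f ⋆ ι` is `f ⋆ 𝟙`.
  have ha : ∀ {P : X ⟶ X} (f : P ⟶ A ≫ B),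
      mprod (mul p t) f (incl e A) ▷ B ⊗≫ A ◁ p
        = (α_ P A B).hom ≫ mprod (mul p t) f (𝟙 (A ≫ B)) := by
    intro P f
    have h := act_mprod hB t f (incl e A)
    rw [act_incl hB] at h
    rw [← h, act]; bicategory
  have hs : ∀ {P Q : X ⟶ X} (f : P ⟶ A ≫ B) (g : Q ⟶ A ≫ B),
      P ◁ g ≫ mprod (mul p t) f (𝟙 (A ≫ B)) = mprod (mul p t) f g := by
    intro P Q f g
    rw [← mprod_precomp_right, Category.comp_id]
  -- The composite of `A ◁ d` with the `B`-linear extension of `q` is `t`.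
  have ht : A ◁ d ⊗≫ q ▷ B ⊗≫ A ◁ p = t := by
    calc A ◁ d ⊗≫ q ▷ B ⊗≫ A ◁ p
        = A ◁ d ⊗≫ (q ▷ B ⊗≫ A ◁ p) := by bicategory
      _ = A ◁ d ≫ mprod (mul p t) (incl e A) (𝟙 (A ≫ B)) := by
          rw [hq', ha]; bicategory
      _ = (α_ A B A).inv ≫ mprod (mul p t) (act p (incl e A)) (incl e A) := by
          rw [hs, hd', ← mprod_phi hB hW, mprod_assoc _ hm]; simp
      _ = t := by
          rw [act_incl hB, ← hi]; bicategory
  refine ⟨?_, ?_, ?_, ?_, ?_, ?_, ?_⟩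
  · calc 𝟙 (B ≫ B ≫ A) ⊗≫ (p ▷ A) ⊗≫ d
        = (α_ B B A).inv ≫ mprod (mul p t) (p ≫ phi p k) (incl e A) := by
          rw [mprod_precomp_left, ← hd']; bicategory
      _ = B ◁ d ≫ mprod (mul p t) (phi p k) (𝟙 (A ≫ B)) := by
          rw [hs, ← phi_mprod_phi hB hW, mprod_assoc _ hm, hd']; simp
      _ = 𝟙 _ ⊗≫ B ◁ d ⊗≫ (d ▷ B ⊗≫ A ◁ p) := by
          nth_rw 3 [hd']
          rw [ha]; bicategory
      _ = _ := by bicategory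
  · calc 𝟙 A ⊗≫ (e ▷ A) ⊗≫ d
        = (λ_ A).inv ≫ mprod (mul p t) (e ≫ phi p k) (incl e A) := by
          rw [mprod_precomp_left, ← hd']; bicategory
      _ = 𝟙 A ⊗≫ A ◁ e := by
          rw [unit_phi hB, one_mprod _ _ (unit_mul hB hW)]; simp only [incl]; bicategory
  · calc 𝟙 (B ≫ A ≫ A) ⊗≫ (d ▷ A) ⊗≫ (A ◁ d) ⊗≫ (q ▷ B) ⊗≫ (A ◁ p)
        = 𝟙 _ ⊗≫ (d ▷ A ⊗≫ (A ◁ d ⊗≫ q ▷ B ⊗≫ A ◁ p)) := by bicategory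
      _ = (α_ B A A).inv ≫ mprod (mul p t) d (incl e A) := by
          rw [ht, hi]; bicategory
      _ = B ◁ q ≫ mprod (mul p t) (phi p k) (𝟙 (A ≫ B)) := by
          rw [hs, hd', mprod_assoc _ hm, hq']; simp
      _ = 𝟙 _ ⊗≫ B ◁ q ⊗≫ (d ▷ B ⊗≫ A ◁ p) := by
          rw [hd', ha]; bicategory
      _ = _ := by bicategory
  · calc 𝟙 B ⊗≫ (B ◁ k) ⊗≫ (d ▷ B) ⊗≫ (A ◁ p)
        = 𝟙 B ⊗≫ B ◁ k ⊗≫ (d ▷ B ⊗≫ A ◁ p) := by bicategory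
      _ = (ρ_ B).inv ≫ B ◁ k ≫ mprod (mul p t) (phi p k) (𝟙 (A ≫ B)) := by
          rw [hd', ha]; bicategory
      _ = 𝟙 B ⊗≫ (k ▷ B) ⊗≫ (A ◁ p) := by
          rw [hs, mprod_one _ _ (mul_unit hW)]; simp only [phi, act]; bicategory
  · calc 𝟙 (A ≫ A ≫ A) ⊗≫ (A ◁ q) ⊗≫ (q ▷ B) ⊗≫ (A ◁ p)
        = 𝟙 _ ⊗≫ A ◁ q ⊗≫ (q ▷ B ⊗≫ A ◁ p) := by bicategory
      _ = A ◁ q ≫ mprod (mul p t) (incl e A) (𝟙 (A ≫ B)) := by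
          nth_rw 2 [hq']
          rw [ha]; bicategory
      _ = (α_ A A A).inv ≫ mprod (mul p t) q (incl e A) := by
          rw [hs, hq', mprod_assoc _ hm]; simp
      _ = 𝟙 _ ⊗≫ (q ▷ A ⊗≫ (A ◁ d ⊗≫ q ▷ B ⊗≫ A ◁ p)) := by
          rw [ht, hi]; bicategory
      _ = _ := by bicategory
  · calc 𝟙 A ⊗≫ (A ◁ k) ⊗≫ (q ▷ B) ⊗≫ (A ◁ p)
        = 𝟙 A ⊗≫ A ◁ k ⊗≫ (q ▷ B ⊗≫ A ◁ p) := by bicategory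
      _ = (ρ_ A).inv ≫ A ◁ k ≫ mprod (mul p t) (incl e A) (𝟙 (A ≫ B)) := by
          rw [hq', ha]; bicategory
      _ = 𝟙 A ⊗≫ A ◁ e := by
          rw [hs, mprod_one _ _ (mul_unit hW)]; simp only [incl]; bicategory
  · calc 𝟙 A ⊗≫ (k ▷ A) ⊗≫ (A ◁ d) ⊗≫ (q ▷ B) ⊗≫ (A ◁ p)
        = 𝟙 A ⊗≫ k ▷ A ⊗≫ (A ◁ d ⊗≫ q ▷ B ⊗≫ A ◁ p) := by bicategory
      _ = _ := by rw [ht]; exact hW.2.2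
end

section
/- Let 𝒞 be a bicategory, X an object of 𝒞, (B, p, e) a monad on X, A : X ⟶ X a 1-morphism, and (d, q, j) a wreath from (X, B) to A. Then the 2-morphisms t := (A ◁ p) ∘ (q ▷ B) ∘ (A ◁ d) : A ≫ B ≫ A ⟶ A ≫ B and k := j : 𝟙 X ⟶ A ≫ B form a warping from (X, B) to A, i.e. they satisfy the warping axioms (W1), (W2), (W3) (up to the canonical coherence isomorphisms of 𝒞). -/
/-!
All three axioms are string-diagram computations: every step is an interchange of 2-morphisms
acting on disjoint factors (`whisker_exchange`), one monad or wreath axiom, or pure coherence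
(`bicategory`).

For (W1), both sides are brought to one normal form `ABABA ⟶ AAABB ⟶ ABBBB ⟶ AB`, in which the
three copies of `d` move every `A` to the left, two copies of `q` then multiply the `A`s, and
the four resulting `B`s are finally multiplied together. On the left side (`warping_assoc_left`),
(X1), used twice, moves `d` before the multiplications, and (X5) reassociates the two `q`s. On the
right side (`warping_assoc_right`), (X3) moves `d` before `q`. Monad associativity makes the order
in which the `B`s are multiplied irrelevant. Axiom (W2) follows from (X4), (X6) and the left unit
law of the monad, and (W3) is (X7) up to coherence.
-/

open CategoryTheory Bicategory
open scoped CategoryTheory.Bicategory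

universe w v u

variable {C : Type u} [Bicategory.{w, v} C]

/-- Associativity of a monad, in the form suited to whiskering: both sides start at the
right-nested triple composite. -/
theorem IsMonad.assoc {X : C} {B : X ⟶ X} {p : B ≫ B ⟶ B} {e : 𝟙 X ⟶ B}
    (hB : IsMonad B p e) :
    𝟙 (B ≫ B ≫ B) ⊗≫ B ◁ p ⊗≫ p = 𝟙 (B ≫ B ≫ B) ⊗≫ p ▷ B ⊗≫ p := by
  calc
    _ = 𝟙 _ ⊗≫ ((α_ B B B).hom ≫ (B ◁ p) ≫ p) ⊗≫ 𝟙 _ := by bicategory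
    _ = _ := by rw [hB.1]; bicategory

/-- Two ways of folding four copies of a monad into one agree. -/
theorem IsMonad.assoc_four {X : C} {B : X ⟶ X} {p : B ≫ B ⟶ B} {e : 𝟙 X ⟶ B}
    (hB : IsMonad B p e) :
    𝟙 (B ≫ B ≫ B ≫ B) ⊗≫ B ◁ p ▷ B ⊗≫ B ◁ p ⊗≫ p
      = 𝟙 (B ≫ B ≫ B ≫ B) ⊗≫ p ▷ B ▷ B ⊗≫ p ▷ B ⊗≫ p := by
  calc
    _ = 𝟙 _ ⊗≫ B ◁ p ▷ B ⊗≫ (𝟙 (B ≫ B ≫ B) ⊗≫ B ◁ p ⊗≫ p) ⊗≫ 𝟙 _ := by bicategory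
    _ = 𝟙 _ ⊗≫ B ◁ p ▷ B ⊗≫ (𝟙 (B ≫ B ≫ B) ⊗≫ p ▷ B ⊗≫ p) ⊗≫ 𝟙 _ := by
      rw [hB.assoc]
    _ = 𝟙 _ ⊗≫ (𝟙 (B ≫ B ≫ B) ⊗≫ B ◁ p ⊗≫ p) ▷ B ⊗≫ p ⊗≫ 𝟙 _ := by bicategory
    _ = _ := by
      rw [hB.assoc]; bicategory

/-- The left side of (W1) in normal form: every `d` is applied first, then the two `q`s, then the
multiplications. -/
theorem warping_assoc_left {X : C} {B A : X ⟶ X}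
    {p : B ≫ B ⟶ B} {e : 𝟙 X ⟶ B} (hB : IsMonad B p e)
    {d : B ≫ A ⟶ A ≫ B} {q : A ≫ A ⟶ A ≫ B} {j : 𝟙 X ⟶ A ≫ B}
    (hX : IsWreath B p e A d q j) {t : A ≫ B ≫ A ⟶ A ≫ B}
    (ht : t = 𝟙 (A ≫ B ≫ A) ⊗≫ (A ◁ d) ⊗≫ (q ▷ B) ⊗≫ (A ◁ p)) :
    𝟙 (A ≫ B ≫ A ≫ B ≫ A) ⊗≫ ((t ▷ B) ▷ A) ⊗≫ (A ◁ (p ▷ A)) ⊗≫ t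
      = 𝟙 (A ≫ B ≫ A ≫ B ≫ A) ⊗≫ A ◁ d ▷ (B ≫ A) ⊗≫ (A ≫ A ≫ B) ◁ d ⊗≫
          (A ≫ A) ◁ d ▷ B ⊗≫ A ◁ q ▷ (B ≫ B) ⊗≫ q ▷ (B ≫ B ≫ B) ⊗≫
          A ◁ p ▷ B ▷ B ⊗≫ A ◁ p ▷ B ⊗≫ A ◁ p := by
  obtain ⟨h1, -, -, -, h5, -, -⟩ := hX
  calc
    _ = 𝟙 _ ⊗≫ A ◁ d ▷ (B ≫ A) ⊗≫ q ▷ (B ≫ B ≫ A) ⊗≫ A ◁ p ▷ (B ≫ A) ⊗≫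
          A ◁ (𝟙 (B ≫ B ≫ A) ⊗≫ p ▷ A ⊗≫ d) ⊗≫ q ▷ B ⊗≫ A ◁ p := by
      rw [ht]; bicategory
    _ = 𝟙 _ ⊗≫ A ◁ d ▷ (B ≫ A) ⊗≫ q ▷ (B ≫ B ≫ A) ⊗≫
          A ◁ (p ▷ (B ≫ A) ≫ B ◁ d) ⊗≫ A ◁ d ▷ B ⊗≫ A ◁ A ◁ p ⊗≫ q ▷ B ⊗≫ A ◁ p := by
      rw [h1]; bicategory
    _ = 𝟙 _ ⊗≫ A ◁ d ▷ (B ≫ A) ⊗≫ q ▷ (B ≫ B ≫ A) ⊗≫ A ◁ (B ≫ B) ◁ d ⊗≫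
          A ◁ (𝟙 (B ≫ B ≫ A) ⊗≫ p ▷ A ⊗≫ d) ▷ B ⊗≫ A ◁ A ◁ p ⊗≫ q ▷ B ⊗≫ A ◁ p := by
      rw [← whisker_exchange]; bicategory
    _ = 𝟙 _ ⊗≫ A ◁ d ▷ (B ≫ A) ⊗≫
          (q ▷ (B ≫ B ≫ A) ≫ (A ≫ B) ◁ (𝟙 (B ≫ B ≫ A) ⊗≫ B ◁ d ⊗≫ d ▷ B ⊗≫ 𝟙 (A ≫ B ≫ B))) ⊗≫
          A ◁ d ▷ B ▷ B ⊗≫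
          ((A ≫ A) ◁ (𝟙 (B ≫ B ≫ B) ⊗≫ p ▷ B ⊗≫ p) ≫ q ▷ B) ⊗≫ A ◁ p := by
      rw [h1]; bicategory
    _ = 𝟙 _ ⊗≫ A ◁ d ▷ (B ≫ A) ⊗≫ (A ≫ A ≫ B) ◁ d ⊗≫ (A ≫ A) ◁ d ▷ B ⊗≫
          q ▷ (A ≫ B ≫ B) ⊗≫ A ◁ d ▷ B ▷ B ⊗≫ q ▷ (B ≫ B ≫ B) ⊗≫
          A ◁ (𝟙 (B ≫ B ≫ B ≫ B) ⊗≫ B ◁ p ▷ B ⊗≫ B ◁ p ⊗≫ p) := by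
      rw [← whisker_exchange q (𝟙 (B ≫ B ≫ A) ⊗≫ B ◁ d ⊗≫ d ▷ B ⊗≫ 𝟙 (A ≫ B ≫ B)),
        whisker_exchange q (𝟙 (B ≫ B ≫ B) ⊗≫ p ▷ B ⊗≫ p)]
      bicategory
    _ = 𝟙 _ ⊗≫ A ◁ d ▷ (B ≫ A) ⊗≫ (A ≫ A ≫ B) ◁ d ⊗≫ (A ≫ A) ◁ d ▷ B ⊗≫
          (𝟙 (A ≫ A ≫ A) ⊗≫ (q ▷ A) ⊗≫ (A ◁ d) ⊗≫ (q ▷ B) ⊗≫ (A ◁ p)) ▷ (B ≫ B) ⊗≫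
          A ◁ p ▷ B ⊗≫ A ◁ p := by
      rw [hB.assoc_four]; bicategory
    _ = _ := by
      rw [← h5]; bicategory

/-- The right side of (W1) reduces to the same normal form as the left side. -/
theorem warping_assoc_right {X : C} {B A : X ⟶ X}
    {p : B ≫ B ⟶ B} {e : 𝟙 X ⟶ B} (hB : IsMonad B p e)
    {d : B ≫ A ⟶ A ≫ B} {q : A ≫ A ⟶ A ≫ B} {j : 𝟙 X ⟶ A ≫ B}
    (hX : IsWreath B p e A d q j) {t : A ≫ B ≫ A ⟶ A ≫ B}
    (ht : t = 𝟙 (A ≫ B ≫ A) ⊗≫ (A ◁ d) ⊗≫ (q ▷ B) ⊗≫ (A ◁ p)) :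
    𝟙 (A ≫ B ≫ A ≫ B ≫ A) ⊗≫ ((A ≫ B) ◁ t) ⊗≫ (t ▷ B) ⊗≫ (A ◁ p)
      = 𝟙 (A ≫ B ≫ A ≫ B ≫ A) ⊗≫ A ◁ d ▷ (B ≫ A) ⊗≫ (A ≫ A ≫ B) ◁ d ⊗≫
          (A ≫ A) ◁ d ▷ B ⊗≫ A ◁ q ▷ (B ≫ B) ⊗≫ q ▷ (B ≫ B ≫ B) ⊗≫
          A ◁ p ▷ B ▷ B ⊗≫ A ◁ p ▷ B ⊗≫ A ◁ p := by
  obtain ⟨-, -, h3, -, -, -, -⟩ := hX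
  calc
    _ = 𝟙 _ ⊗≫ (A ≫ B ≫ A) ◁ d ⊗≫ (A ≫ B) ◁ q ▷ B ⊗≫
          ((A ≫ B ≫ A) ◁ p ≫ t ▷ B) ⊗≫ A ◁ p := by
      -- Only the first copy of `t` is unfolded; the second slides past a multiplication as a whole.
      nth_rewrite 1 [ht]; bicategory
    _ = 𝟙 _ ⊗≫ (A ≫ B ≫ A) ◁ d ⊗≫ (A ≫ B) ◁ q ▷ B ⊗≫
          t ▷ (B ≫ B) ⊗≫ A ◁ (𝟙 (B ≫ B ≫ B) ⊗≫ B ◁ p ⊗≫ p) := by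
      rw [whisker_exchange]; bicategory
    _ = 𝟙 _ ⊗≫ (A ≫ B ≫ A) ◁ d ⊗≫ (A ≫ B) ◁ q ▷ B ⊗≫ A ◁ d ▷ B ▷ B ⊗≫
          q ▷ (B ≫ B ≫ B) ⊗≫
          A ◁ (𝟙 (B ≫ B ≫ B ≫ B) ⊗≫ p ▷ B ▷ B ⊗≫ p ▷ B ⊗≫ p) := by
      rw [hB.assoc, ht]; bicategory
    _ = 𝟙 _ ⊗≫ (A ≫ B ≫ A) ◁ d ⊗≫ (A ≫ B) ◁ q ▷ B ⊗≫ A ◁ d ▷ B ▷ B ⊗≫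
          (q ▷ ((B ≫ B) ≫ B) ≫ (A ≫ B) ◁ p ▷ B) ⊗≫
          A ◁ (𝟙 (B ≫ B ≫ B) ⊗≫ B ◁ p ⊗≫ p) := by
      rw [← hB.assoc_four]; bicategory
    _ = 𝟙 _ ⊗≫ (A ≫ B ≫ A) ◁ d ⊗≫
          A ◁ (𝟙 (B ≫ A ≫ A) ⊗≫ (B ◁ q) ⊗≫ (d ▷ B) ⊗≫ (A ◁ p)) ▷ B ⊗≫
          q ▷ (B ≫ B) ⊗≫ A ◁ (𝟙 (B ≫ B ≫ B) ⊗≫ B ◁ p ⊗≫ p) := by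
      rw [← whisker_exchange]; bicategory
    _ = 𝟙 _ ⊗≫ A ◁ ((B ≫ A) ◁ d ≫ d ▷ (A ≫ B)) ⊗≫ (A ≫ A) ◁ d ▷ B ⊗≫
          A ◁ q ▷ B ▷ B ⊗≫ ((A ≫ A) ◁ p ▷ B ≫ q ▷ (B ≫ B)) ⊗≫
          A ◁ (𝟙 (B ≫ B ≫ B) ⊗≫ B ◁ p ⊗≫ p) := by
      rw [← h3]; bicategory
    _ = 𝟙 _ ⊗≫ A ◁ d ▷ (B ≫ A) ⊗≫ (A ≫ A ≫ B) ◁ d ⊗≫ (A ≫ A) ◁ d ▷ B ⊗≫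
          A ◁ q ▷ (B ≫ B) ⊗≫ q ▷ (B ≫ B ≫ B) ⊗≫
          A ◁ (𝟙 (B ≫ B ≫ B ≫ B) ⊗≫ B ◁ p ▷ B ⊗≫ B ◁ p ⊗≫ p) := by
      rw [whisker_exchange, whisker_exchange]; bicategory
    _ = _ := by
      rw [hB.assoc_four]; bicategory

/-- A wreath `(d, q, j)` from `(X, B)` to `A` gives rise to a warping
`t := (A ◁ p) ∘ (q ▷ B) ∘ (A ◁ d)`, `k := j`. -/
theorem wreath_gives_warping {X : C} (B A : X ⟶ X)
    (p : B ≫ B ⟶ B) (e : 𝟙 X ⟶ B) (hB : IsMonad B p e)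
    (d : B ≫ A ⟶ A ≫ B) (q : A ≫ A ⟶ A ≫ B) (j : 𝟙 X ⟶ A ≫ B)
    (hX : IsWreath B p e A d q j)
    (t : A ≫ B ≫ A ⟶ A ≫ B)
    (ht : t = 𝟙 (A ≫ B ≫ A) ⊗≫ (A ◁ d) ⊗≫ (q ▷ B) ⊗≫ (A ◁ p)) :
    IsWarping B p e A t j := by
  obtain ⟨-, hl, -⟩ := id hB
  obtain ⟨-, -, -, h4, -, h6, h7⟩ := id hX
  have ha := hB.assoc
  refine ⟨(warping_assoc_left hB hX ht).trans (warping_assoc_right hB hX ht).symm, ?_, ?_⟩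
  · calc
      _ = 𝟙 _ ⊗≫ A ◁ (𝟙 B ⊗≫ B ◁ j ⊗≫ d ▷ B) ⊗≫ q ▷ (B ≫ B) ⊗≫
            A ◁ (𝟙 (B ≫ B ≫ B) ⊗≫ p ▷ B ⊗≫ p) ⊗≫ 𝟙 _ := by
        rw [ht]; bicategory
      _ = 𝟙 _ ⊗≫ A ◁ (𝟙 B ⊗≫ B ◁ j ⊗≫ d ▷ B) ⊗≫ (q ▷ (B ≫ B) ≫
            (A ≫ B) ◁ p) ⊗≫ A ◁ p ⊗≫ 𝟙 _ := by
        rw [← ha]; bicategory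
      _ = 𝟙 _ ⊗≫ A ◁ (𝟙 B ⊗≫ B ◁ j ⊗≫ d ▷ B ⊗≫ A ◁ p) ⊗≫ q ▷ B ⊗≫ A ◁ p ⊗≫ 𝟙 _ := by
        rw [← whisker_exchange]; bicategory
      _ = 𝟙 _ ⊗≫ (A ◁ j) ▷ B ⊗≫ ((A ≫ A) ◁ p ≫ q ▷ B) ⊗≫ A ◁ p ⊗≫ 𝟙 _ := by
        rw [h4]; bicategory
      _ = 𝟙 _ ⊗≫ (A ◁ j) ▷ B ⊗≫ q ▷ (B ≫ B) ⊗≫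
            A ◁ (𝟙 (B ≫ B ≫ B) ⊗≫ B ◁ p ⊗≫ p) ⊗≫ 𝟙 _ := by
        rw [whisker_exchange]; bicategory
      _ = 𝟙 _ ⊗≫ (𝟙 A ⊗≫ A ◁ j ⊗≫ q ▷ B ⊗≫ A ◁ p) ▷ B ⊗≫ A ◁ p ⊗≫ 𝟙 _ := by
        rw [ha]; bicategory
      _ = 𝟙 _ ⊗≫ A ◁ (e ▷ B ≫ p) ⊗≫ 𝟙 _ := by
        rw [h6]; bicategory
      _ = 𝟙 (A ≫ B) := by
        rw [hl]; bicategory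
  · rw [← h7, ht]; bicategory
end

section
/- Let 𝒞 be a bicategory, X an object of 𝒞, (B, p, e) a monad on X, and A : X ⟶ X a 1-morphism. The assignments sending a warping (t, k) to the wreath (d, q, j) with d = t ∘ (A ◁ p ▷ A) ∘ (k ▷ (B ≫ A)), q = t ∘ (A ◁ e ▷ A), j = k, and sending a wreath (d, q, j) to the warping (t, k) with t = (A ◁ p) ∘ (q ▷ B) ∘ (A ◁ d), k = j, are mutually inverse; hence there is a one-to-one correspondence between warpings from (X, B) to A and wreaths from (X, B) to A. -/
/-!
The bicategorical statement is reduced to one about functors and natural transformations. A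
1-morphism `A : X ⟶ X` acts on the hom-category `X ⟶ X` by postcomposition, so the monad `B`
becomes a monad `T` on that category, and each 2-morphism becomes a natural family of morphisms
`Z ◁ t`. With all composites of 1-morphisms bracketed to the left, the axioms for these families
contain no associators or unitors. A 2-morphism is recovered from its family at `Z = 𝟙 X`, so the
axioms for 2-morphisms and for families are equivalent (`isWarping_of_warpingFamily`,
`isWreath_of_wreathFamily` and their converses), and equality can be tested on families
(`famT_injective` and its analogues).

For families, write `kext f = T f ≫ μ` for Kleisli extension. The assignments become
`d = A (kext k) ≫ t`, `q = A η ≫ t` and `t = d ≫ kext q`. From a warping, the operation sending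
`f : Y ⟶ T (A W)` to `A f ≫ t` is an extension operation with unit `k`, associative by
`WarpingFamily.t_kext` and unital by `WarpingFamily.k_kext`; all wreath axioms are instances of
these laws, together with `d ≫ kext q = t`. From a wreath, `WreathFamily.map_kext_d` moves `d` past
Kleisli extensions, and associativity of `t` then reduces to `WreathFamily.map_t_comp`, which combines
the axioms `x3` and `x5`.
-/

open CategoryTheory Bicategory
open scoped CategoryTheory.Bicategory

universe w v u

variable {C : Type u} [Bicategory.{w, v} C]

/-! ### Warping and wreath families over a monad on a category -/

section Components

variable {D : Type*} [Category* D]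

/-- The Kleisli extension `T Y ⟶ T Z` of `f : Y ⟶ T Z`. -/
def kext (T : Monad D) {Y Z : D} (f : Y ⟶ T.obj Z) : T.obj Y ⟶ T.obj Z :=
  T.map f ≫ T.μ.app Z

variable (T : Monad D) (A : D ⥤ D)

lemma eta_kext {Y Z : D} (f : Y ⟶ T.obj Z) : T.η.app Y ≫ kext T f = f := by
  have := T.η.naturality f
  dsimp at this
  rw [kext, ← Category.assoc, ← this]
  simp

lemma kext_eta (Z : D) : kext (Y := Z) T (T.η.app Z) = 𝟙 (T.obj Z) := by
  simp [kext]

lemma map_kext {Y Z W : D} (f : Y ⟶ Z) (g : Z ⟶ T.obj W) :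
    T.map f ≫ kext T g = kext T (f ≫ g) := by
  simp [kext]

lemma kext_kext {Y Z W : D} (f : Y ⟶ T.obj Z) (g : Z ⟶ T.obj W) :
    kext T f ≫ kext T g = kext T (f ≫ kext T g) := by
  have := T.μ.naturality g
  dsimp at this
  simp only [kext, Category.assoc, T.map_comp, T.assoc]
  rw [← Category.assoc (T.μ.app Z), ← this, Category.assoc]

/-- A warping in the strict 2-category of categories, from a monad `T` to an endofunctor `A`, given
by components: natural families `t` and `k` satisfying the warping axioms, written with Kleisli
extensions. The composite `A ≫ B` of 1-morphisms corresponds to `Z ↦ T (A Z)`. -/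
structure WarpingFamily (t : ∀ Z, A.obj (T.obj (A.obj Z)) ⟶ T.obj (A.obj Z))
    (k : ∀ Z, Z ⟶ T.obj (A.obj Z)) : Prop where
  t_nat {Y Z : D} (f : Y ⟶ Z) :
    A.map (T.map (A.map f)) ≫ t Z = t Y ≫ T.map (A.map f)
  k_nat {Y Z : D} (f : Y ⟶ Z) : f ≫ k Z = k Y ≫ T.map (A.map f)
  w1 (Z : D) : A.map (kext T (t Z)) ≫ t Z = t (T.obj (A.obj Z)) ≫ kext T (t Z)
  w2 (Z : D) : k (T.obj (A.obj Z)) ≫ kext T (t Z) = 𝟙 _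
  w3 (Z : D) : A.map (k Z) ≫ t Z = T.η.app (A.obj Z)

/-- The component form of a wreath in the strict 2-category of categories, from a monad `T` to an
endofunctor `A`, written with Kleisli extensions. Only `d` is required to be natural; where the
naturality of `q` and `j` matters, it is a separate hypothesis. -/
structure WreathFamily (d : ∀ Z, A.obj (T.obj Z) ⟶ T.obj (A.obj Z))
    (q : ∀ Z, A.obj (A.obj Z) ⟶ T.obj (A.obj Z)) (j : ∀ Z, Z ⟶ T.obj (A.obj Z)) : Prop where
  d_nat {Y Z : D} (f : Y ⟶ Z) : A.map (T.map f) ≫ d Z = d Y ≫ T.map (A.map f)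
  x1 (Z : D) : A.map (T.μ.app Z) ≫ d Z = d (T.obj Z) ≫ kext T (d Z)
  x2 (Z : D) : A.map (T.η.app Z) ≫ d Z = T.η.app (A.obj Z)
  x3 (Z : D) : A.map (d Z) ≫ d (A.obj Z) ≫ kext T (q Z) = q (T.obj Z) ≫ kext T (d Z)
  x4 (Z : D) : j (T.obj Z) ≫ kext T (d Z) = kext T (j Z)
  x5 (Z : D) : q (A.obj Z) ≫ kext T (q Z) = A.map (q Z) ≫ d (A.obj Z) ≫ kext T (q Z)
  x6 (Z : D) : j (A.obj Z) ≫ kext T (q Z) = T.η.app (A.obj Z)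
  x7 (Z : D) : A.map (j Z) ≫ d (A.obj Z) ≫ kext T (q Z) = T.η.app (A.obj Z)

variable {T A}

namespace WarpingFamily

variable {t : ∀ Z, A.obj (T.obj (A.obj Z)) ⟶ T.obj (A.obj Z)} {k : ∀ Z, Z ⟶ T.obj (A.obj Z)}

/-- Axiom `w1` after reindexing along `f`: associativity of the Kleisli-type composition in which
`f : Y ⟶ T (A W)` is extended to `A f ≫ t : A Y ⟶ T (A W)`. -/
lemma t_kext (h : WarpingFamily T A t k) {Y W : D} (f : Y ⟶ T.obj (A.obj W)) :
    t Y ≫ kext T (A.map f ≫ t W) = A.map (kext T (A.map f ≫ t W)) ≫ t W := by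
  rw [← map_kext, ← Category.assoc, ← h.t_nat, Category.assoc, ← h.w1, A.map_comp,
    Category.assoc]

/-- Axiom `w2` after reindexing along `f`: `k` is a unit for the Kleisli-type composition. -/
lemma k_kext (h : WarpingFamily T A t k) {Y W : D} (f : Y ⟶ T.obj (A.obj W)) :
    k Y ≫ kext T (A.map f ≫ t W) = f := by
  rw [← map_kext, ← Category.assoc, ← h.k_nat, Category.assoc, h.w2, Category.comp_id]

/-- With `d = A (kext k) ≫ t` and `q = A η ≫ t`, the composite `d ≫ kext q` is `t`. -/
lemma d_comp_kext_q (h : WarpingFamily T A t k) (Z : D) :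
    (A.map (kext T (k (A.obj Z))) ≫ t (A.obj Z)) ≫
      kext T (A.map (T.η.app (A.obj Z)) ≫ t Z) = t Z := by
  rw [Category.assoc, h.t_kext, ← A.map_comp_assoc, kext_kext, h.k_kext, kext_eta,
    A.map_id, Category.id_comp]

lemma toWreathFamily (h : WarpingFamily T A t k) :
    WreathFamily T A (fun Z => A.map (kext T (k Z)) ≫ t Z)
      (fun Z => A.map (T.η.app (A.obj Z)) ≫ t Z) k where
  d_nat f := by
    rw [← A.map_comp_assoc, map_kext, h.k_nat, Category.assoc, ← h.t_nat, ← A.map_comp_assoc]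
    have := T.μ.naturality (A.map f)
    dsimp at this
    simp [kext, ← this]
  x1 Z := by
    have hμ : T.μ.app Z ≫ kext T (k Z) = kext T (kext T (k Z)) := by
      simpa [kext] using kext_kext T (𝟙 (T.obj Z)) (k Z)
    rw [Category.assoc, h.t_kext, ← A.map_comp_assoc, ← A.map_comp_assoc, kext_kext, h.k_kext, hμ]
  x2 Z := by rw [← A.map_comp_assoc, eta_kext]; exact h.w3 Z
  x3 Z := by
    rw [h.d_comp_kext_q, Category.assoc, h.t_kext, ← A.map_comp_assoc, eta_kext]
  x4 Z := h.k_kext _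
  x5 Z := by
    rw [h.d_comp_kext_q, Category.assoc, h.t_kext, ← A.map_comp_assoc, eta_kext]
  x6 Z := h.k_kext _
  x7 Z := by rw [h.d_comp_kext_q]; exact h.w3 Z

end WarpingFamily

namespace WreathFamily

variable {d : ∀ Z, A.obj (T.obj Z) ⟶ T.obj (A.obj Z)}
  {q : ∀ Z, A.obj (A.obj Z) ⟶ T.obj (A.obj Z)} {j : ∀ Z, Z ⟶ T.obj (A.obj Z)}

/-- `d` commutes with Kleisli extension, as a distributive law lifting `A` to the Kleisli category
of `T`; this combines `x1` with the naturality of `d`. -/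
lemma map_kext_d (h : WreathFamily T A d q j) {Y W : D} (f : Y ⟶ T.obj W) :
    A.map (kext T f) ≫ d W = d Y ≫ kext T (A.map f ≫ d W) := by
  rw [kext, A.map_comp, Category.assoc, h.x1, ← Category.assoc, h.d_nat, Category.assoc,
    map_kext]

/-- The family `d` is recovered from `t = d ≫ kext q` and `j`. -/
lemma d_eq (h : WreathFamily T A d q j) (Z : D) :
    A.map (kext T (j Z)) ≫ d (A.obj Z) ≫ kext T (q Z) = d Z := by
  rw [← Category.assoc, h.map_kext_d, Category.assoc, kext_kext, Category.assoc, h.x7, kext_eta,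
    Category.comp_id]

/-- The family `q` is recovered from `t = d ≫ kext q`. -/
lemma q_eq (h : WreathFamily T A d q j) (Z : D) :
    A.map (T.η.app (A.obj Z)) ≫ d (A.obj Z) ≫ kext T (q Z) = q Z := by
  rw [← Category.assoc, h.x2, eta_kext]

/-- Axiom `w1` for `t = d ≫ kext q`, precomposed with `η` so that two consecutive copies of `A`
replace `A`, `T`, `A`; this is where `x3` and `x5` enter. -/
lemma map_t_comp (h : WreathFamily T A d q j) (Z : D) :
    A.map (d (A.obj Z) ≫ kext T (q Z)) ≫ d (A.obj Z) ≫ kext T (q Z) =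
      q (T.obj (A.obj Z)) ≫ kext T (d (A.obj Z) ≫ kext T (q Z)) := by
  rw [A.map_comp, Category.assoc, ← Category.assoc (A.map (kext T (q Z))), h.map_kext_d,
    Category.assoc, kext_kext, Category.assoc, ← h.x5, ← kext_kext, ← kext_kext,
    ← Category.assoc (q _), ← h.x3]
  simp only [Category.assoc]

lemma toWarpingFamily (h : WreathFamily T A d q j)
    (q_nat : ∀ {Y Z : D} (f : Y ⟶ Z), A.map (A.map f) ≫ q Z = q Y ≫ T.map (A.map f))
    (j_nat : ∀ {Y Z : D} (f : Y ⟶ Z), f ≫ j Z = j Y ≫ T.map (A.map f)) :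
    WarpingFamily T A (fun Z => d (A.obj Z) ≫ kext T (q Z)) j where
  t_nat f := by
    have := T.μ.naturality (A.map f)
    dsimp at this
    rw [← Category.assoc, h.d_nat, Category.assoc, map_kext, q_nat]
    simp [kext, this]
  k_nat := j_nat
  w1 Z := by
    rw [← Category.assoc, h.map_kext_d, Category.assoc, kext_kext, Category.assoc, h.map_t_comp,
      Category.assoc, kext_kext]
  w2 Z := by
    rw [← kext_kext, ← Category.assoc, h.x4, kext_kext, h.x6, kext_eta]
  w3 := h.x7

end WreathFamily

end Components

/-! ### The action of endo-1-morphisms on the hom-category -/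

section Action

variable {X : C} {B A : X ⟶ X} {p : B ≫ B ⟶ B} {e : 𝟙 X ⟶ B}

/-- Postcomposition with `A`, as an endofunctor of the hom-category `X ⟶ X`. -/
@[simps]
def postFunctor (A : X ⟶ X) : (X ⟶ X) ⥤ (X ⟶ X) where
  obj Z := Z ≫ A
  map f := f ▷ A

/-- The family `Z ◁ e`, with source and target bracketed to the left. It is the unit of `postMonad`. -/
def famE (e : 𝟙 X ⟶ B) (Z : X ⟶ X) : Z ⟶ Z ≫ B :=
  𝟙 _ ⊗≫ Z ◁ e ⊗≫ 𝟙 _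

/-- The family `Z ◁ p`, with source and target bracketed to the left. It is the multiplication of `postMonad`. -/
def famP (p : B ≫ B ⟶ B) (Z : X ⟶ X) : (Z ≫ B) ≫ B ⟶ Z ≫ B :=
  𝟙 _ ⊗≫ Z ◁ p ⊗≫ 𝟙 _

lemma famE_nat (e : 𝟙 X ⟶ B) {Y Z : X ⟶ X} (f : Y ⟶ Z) :
    f ≫ famE e Z = famE e Y ≫ f ▷ B := by
  unfold famE
  calc _ = 𝟙 _ ⊗≫ (f ▷ 𝟙 X ≫ Z ◁ e) ⊗≫ 𝟙 _ := by bicategory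
    _ = _ := by rw [← whisker_exchange]; bicategory

lemma famP_nat (p : B ≫ B ⟶ B) {Y Z : X ⟶ X} (f : Y ⟶ Z) :
    f ▷ B ▷ B ≫ famP p Z = famP p Y ≫ f ▷ B := by
  unfold famP
  calc _ = 𝟙 _ ⊗≫ (f ▷ (B ≫ B) ≫ Z ◁ p) ⊗≫ 𝟙 _ := by bicategory
    _ = _ := by rw [← whisker_exchange]; bicategory

lemma famP_assoc (hB : IsMonad B p e) (Z : X ⟶ X) :
    famP p Z ▷ B ≫ famP p Z = famP p (Z ≫ B) ≫ famP p Z := by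
  unfold famP
  calc _ = 𝟙 _ ⊗≫ Z ◁ ((α_ B B B).hom ≫ (B ◁ p) ≫ p) ⊗≫ 𝟙 _ := by rw [hB.1]; bicategory
    _ = _ := by bicategory

lemma famE_famP (hB : IsMonad B p e) (Z : X ⟶ X) : famE e (Z ≫ B) ≫ famP p Z = 𝟙 (Z ≫ B) := by
  unfold famE famP
  calc _ = 𝟙 _ ⊗≫ Z ◁ ((B ◁ e) ≫ p) ⊗≫ 𝟙 _ := by bicategory
    _ = _ := by rw [hB.2.2]; bicategory

lemma famE_whiskerRight_famP (hB : IsMonad B p e) (Z : X ⟶ X) :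
    famE e Z ▷ B ≫ famP p Z = 𝟙 (Z ≫ B) := by
  unfold famE famP
  calc _ = 𝟙 _ ⊗≫ Z ◁ ((e ▷ B) ≫ p) ⊗≫ 𝟙 _ := by bicategory
    _ = _ := by rw [hB.2.1]; bicategory

/-- The monad on the hom-category `X ⟶ X` given by postcomposition with `B`. -/
def postMonad (hB : IsMonad B p e) : Monad (X ⟶ X) where
  toFunctor := postFunctor B
  η := { app := famE e, naturality := fun _ _ f => famE_nat e f }
  μ := { app := famP p, naturality := fun _ _ f => famP_nat p f }
  assoc := famP_assoc hB
  left_unit := famE_famP hB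
  right_unit := famE_whiskerRight_famP hB

/-- The family `Z ◁ t`, with source and target bracketed to the left. -/
def famT (t : A ≫ B ≫ A ⟶ A ≫ B) (Z : X ⟶ X) : ((Z ≫ A) ≫ B) ≫ A ⟶ (Z ≫ A) ≫ B :=
  𝟙 _ ⊗≫ Z ◁ t ⊗≫ 𝟙 _

/-- The family `Z ◁ d`, with source and target bracketed to the left. -/
def famD (d : B ≫ A ⟶ A ≫ B) (Z : X ⟶ X) : (Z ≫ B) ≫ A ⟶ (Z ≫ A) ≫ B :=
  𝟙 _ ⊗≫ Z ◁ d ⊗≫ 𝟙 _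

/-- The family `Z ◁ q`, with source and target bracketed to the left. -/
def famQ (q : A ≫ A ⟶ A ≫ B) (Z : X ⟶ X) : (Z ≫ A) ≫ A ⟶ (Z ≫ A) ≫ B :=
  𝟙 _ ⊗≫ Z ◁ q ⊗≫ 𝟙 _

/-- The family `Z ◁ j`, with source and target bracketed to the left.
It also serves for the 2-morphism `k` of a warping. -/
def famJ (j : 𝟙 X ⟶ A ≫ B) (Z : X ⟶ X) : Z ⟶ (Z ≫ A) ≫ B :=
  𝟙 _ ⊗≫ Z ◁ j ⊗≫ 𝟙 _

lemma famT_nat (t : A ≫ B ≫ A ⟶ A ≫ B) {Y Z : X ⟶ X} (f : Y ⟶ Z) :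
    f ▷ A ▷ B ▷ A ≫ famT t Z = famT t Y ≫ f ▷ A ▷ B := by
  unfold famT
  calc _ = 𝟙 _ ⊗≫ (f ▷ (A ≫ B ≫ A) ≫ Z ◁ t) ⊗≫ 𝟙 _ := by bicategory
    _ = _ := by rw [← whisker_exchange]; bicategory

lemma famD_nat (d : B ≫ A ⟶ A ≫ B) {Y Z : X ⟶ X} (f : Y ⟶ Z) :
    f ▷ B ▷ A ≫ famD d Z = famD d Y ≫ f ▷ A ▷ B := by
  unfold famD
  calc _ = 𝟙 _ ⊗≫ (f ▷ (B ≫ A) ≫ Z ◁ d) ⊗≫ 𝟙 _ := by bicategory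
    _ = _ := by rw [← whisker_exchange]; bicategory

lemma famQ_nat (q : A ≫ A ⟶ A ≫ B) {Y Z : X ⟶ X} (f : Y ⟶ Z) :
    f ▷ A ▷ A ≫ famQ q Z = famQ q Y ≫ f ▷ A ▷ B := by
  unfold famQ
  calc _ = 𝟙 _ ⊗≫ (f ▷ (A ≫ A) ≫ Z ◁ q) ⊗≫ 𝟙 _ := by bicategory
    _ = _ := by rw [← whisker_exchange]; bicategory

lemma famJ_nat (j : 𝟙 X ⟶ A ≫ B) {Y Z : X ⟶ X} (f : Y ⟶ Z) :
    f ≫ famJ j Z = famJ j Y ≫ f ▷ A ▷ B := by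
  unfold famJ
  calc _ = 𝟙 _ ⊗≫ (f ▷ 𝟙 X ≫ Z ◁ j) ⊗≫ 𝟙 _ := by bicategory
    _ = _ := by rw [← whisker_exchange]; bicategory

/-- A 2-morphism is recovered from its component at the identity 1-morphism. -/
lemma famT_injective : Function.Injective (famT : (A ≫ B ≫ A ⟶ A ≫ B) → _) := fun s t h => by
  calc s = 𝟙 _ ⊗≫ famT s (𝟙 X) ⊗≫ 𝟙 _ := by unfold famT; bicategory
    _ = t := by rw [h]; unfold famT; bicategory

lemma famD_injective : Function.Injective (famD : (B ≫ A ⟶ A ≫ B) → _) := fun s t h => by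
  calc s = 𝟙 _ ⊗≫ famD s (𝟙 X) ⊗≫ 𝟙 _ := by unfold famD; bicategory
    _ = t := by rw [h]; unfold famD; bicategory

lemma famQ_injective : Function.Injective (famQ : (A ≫ A ⟶ A ≫ B) → _) := fun s t h => by
  calc s = 𝟙 _ ⊗≫ famQ s (𝟙 X) ⊗≫ 𝟙 _ := by unfold famQ; bicategory
    _ = t := by rw [h]; unfold famQ; bicategory

/-! ### Translation between equations of 2-morphisms and of families -/

/-- Each family axiom at `Z` is the corresponding warping axiom whiskered on the left by `Z`. -/
lemma warpingFamily_of_isWarping (hB : IsMonad B p e) {t : A ≫ B ≫ A ⟶ A ≫ B}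
    {k : 𝟙 X ⟶ A ≫ B} (h : IsWarping B p e A t k) :
    WarpingFamily (postMonad hB) (postFunctor A) (famT t) (famJ k) where
  t_nat := famT_nat t
  k_nat := famJ_nat k
  w1 Z := by
    change (famT t Z ▷ B ≫ famP p (Z ≫ A)) ▷ A ≫ famT t Z =
      famT t ((Z ≫ A) ≫ B) ≫ famT t Z ▷ B ≫ famP p (Z ≫ A)
    unfold famT famP
    refine Eq.trans (b := 𝟙 _ ⊗≫ Z ◁ (𝟙 (A ≫ B ≫ A ≫ B ≫ A) ⊗≫ ((t ▷ B) ▷ A) ⊗≫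
      (A ◁ (p ▷ A)) ⊗≫ t) ⊗≫ 𝟙 _) (by bicategory) ?_
    rw [h.1]; bicategory
  w2 Z := by
    change famJ k ((Z ≫ A) ≫ B) ≫ famT t Z ▷ B ≫ famP p (Z ≫ A) = 𝟙 _
    unfold famT famP famJ
    refine Eq.trans (b := 𝟙 _ ⊗≫ Z ◁ (𝟙 (A ≫ B) ⊗≫ ((A ≫ B) ◁ k) ⊗≫ (t ▷ B) ⊗≫ (A ◁ p))
      ⊗≫ 𝟙 _) (by bicategory) ?_
    rw [h.2.1]; bicategory
  w3 Z := by
    change famJ k Z ▷ A ≫ famT t Z = famE e (Z ≫ A)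
    unfold famT famJ famE
    refine Eq.trans (b := 𝟙 _ ⊗≫ Z ◁ (𝟙 A ⊗≫ (k ▷ A) ⊗≫ t) ⊗≫ 𝟙 _) (by bicategory) ?_
    rw [h.2.2]; bicategory

/-- Each warping axiom is the corresponding family axiom at the identity 1-morphism, up to
unitors. -/
lemma isWarping_of_warpingFamily (hB : IsMonad B p e) {t : A ≫ B ≫ A ⟶ A ≫ B}
    {k : 𝟙 X ⟶ A ≫ B}
    (h : WarpingFamily (postMonad hB) (postFunctor A) (famT t) (famJ k)) :
    IsWarping B p e A t k := by
  refine ⟨?_, ?_, ?_⟩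
  · have h : (famT t (𝟙 X) ▷ B ≫ famP p (𝟙 X ≫ A)) ▷ A ≫ famT t (𝟙 X) =
      famT t ((𝟙 X ≫ A) ≫ B) ≫ famT t (𝟙 X) ▷ B ≫ famP p (𝟙 X ≫ A) := h.w1 (𝟙 X)
    calc _ = 𝟙 _ ⊗≫ ((famT t (𝟙 X) ▷ B ≫ famP p (𝟙 X ≫ A)) ▷ A ≫ famT t (𝟙 X)) ⊗≫ 𝟙 _ := by
          unfold famT famP; bicategory
      _ = _ := by rw [h]; unfold famT famP; bicategory
  · have h : famJ k ((𝟙 X ≫ A) ≫ B) ≫ famT t (𝟙 X) ▷ B ≫ famP p (𝟙 X ≫ A) = 𝟙 _ :=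
      h.w2 (𝟙 X)
    calc _ = 𝟙 _ ⊗≫ (famJ k ((𝟙 X ≫ A) ≫ B) ≫ famT t (𝟙 X) ▷ B ≫ famP p (𝟙 X ≫ A)) ⊗≫
            𝟙 _ := by
          unfold famT famP famJ; bicategory
      _ = _ := by rw [h]; bicategory
  · have h : famJ k (𝟙 X) ▷ A ≫ famT t (𝟙 X) = famE e (𝟙 X ≫ A) := h.w3 (𝟙 X)
    calc _ = 𝟙 _ ⊗≫ (famJ k (𝟙 X) ▷ A ≫ famT t (𝟙 X)) ⊗≫ 𝟙 _ := by
          unfold famT famJ; bicategory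
      _ = _ := by rw [h]; unfold famE; bicategory

/-- Each family axiom at `Z` is the corresponding wreath axiom whiskered on the left by `Z`. -/
lemma wreathFamily_of_isWreath (hB : IsMonad B p e) {d : B ≫ A ⟶ A ≫ B} {q : A ≫ A ⟶ A ≫ B}
    {j : 𝟙 X ⟶ A ≫ B} (h : IsWreath B p e A d q j) :
    WreathFamily (postMonad hB) (postFunctor A) (famD d) (famQ q) (famJ j) where
  d_nat := famD_nat d
  x1 Z := by
    change famP p Z ▷ A ≫ famD d Z =
      famD d (Z ≫ B) ≫ famD d Z ▷ B ≫ famP p (Z ≫ A)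
    unfold famD famP
    refine Eq.trans (b := 𝟙 _ ⊗≫ Z ◁ (𝟙 (B ≫ B ≫ A) ⊗≫ (p ▷ A) ⊗≫ d) ⊗≫ 𝟙 _)
      (by bicategory) ?_
    rw [h.1]; bicategory
  x2 Z := by
    change famE e Z ▷ A ≫ famD d Z =
      famE e (Z ≫ A)
    unfold famD famE
    refine Eq.trans (b := 𝟙 _ ⊗≫ Z ◁ (𝟙 A ⊗≫ (e ▷ A) ⊗≫ d) ⊗≫ 𝟙 _)
      (by bicategory) ?_
    rw [h.2.1]; bicategory
  x3 Z := by
    change famD d Z ▷ A ≫ famD d (Z ≫ A) ≫ famQ q Z ▷ B ≫ famP p (Z ≫ A) =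
      famQ q (Z ≫ B) ≫ famD d Z ▷ B ≫ famP p (Z ≫ A)
    unfold famD famQ famP
    refine Eq.trans (b := 𝟙 _ ⊗≫ Z ◁ (𝟙 (B ≫ A ≫ A) ⊗≫ (d ▷ A) ⊗≫ (A ◁ d) ⊗≫ (q ▷ B) ⊗≫ (A ◁ p)) ⊗≫ 𝟙 _)
      (by bicategory) ?_
    rw [h.2.2.1]; bicategory
  x4 Z := by
    change famJ j (Z ≫ B) ≫ famD d Z ▷ B ≫ famP p (Z ≫ A) =
      famJ j Z ▷ B ≫ famP p (Z ≫ A)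
    unfold famD famJ famP
    refine Eq.trans (b := 𝟙 _ ⊗≫ Z ◁ (𝟙 B ⊗≫ (B ◁ j) ⊗≫ (d ▷ B) ⊗≫ (A ◁ p)) ⊗≫ 𝟙 _)
      (by bicategory) ?_
    rw [h.2.2.2.1]; bicategory
  x5 Z := by
    change famQ q (Z ≫ A) ≫ famQ q Z ▷ B ≫ famP p (Z ≫ A) =
      famQ q Z ▷ A ≫ famD d (Z ≫ A) ≫ famQ q Z ▷ B ≫ famP p (Z ≫ A)
    unfold famD famQ famP
    refine Eq.trans (b := 𝟙 _ ⊗≫ Z ◁ (𝟙 (A ≫ A ≫ A) ⊗≫ (A ◁ q) ⊗≫ (q ▷ B) ⊗≫ (A ◁ p)) ⊗≫ 𝟙 _)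
      (by bicategory) ?_
    rw [h.2.2.2.2.1]; bicategory
  x6 Z := by
    change famJ j (Z ≫ A) ≫ famQ q Z ▷ B ≫ famP p (Z ≫ A) =
      famE e (Z ≫ A)
    unfold famQ famJ famP famE
    refine Eq.trans (b := 𝟙 _ ⊗≫ Z ◁ (𝟙 A ⊗≫ (A ◁ j) ⊗≫ (q ▷ B) ⊗≫ (A ◁ p)) ⊗≫ 𝟙 _)
      (by bicategory) ?_
    rw [h.2.2.2.2.2.1]; bicategory
  x7 Z := by
    change famJ j Z ▷ A ≫ famD d (Z ≫ A) ≫ famQ q Z ▷ B ≫ famP p (Z ≫ A) =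
      famE e (Z ≫ A)
    unfold famD famQ famJ famP famE
    refine Eq.trans (b := 𝟙 _ ⊗≫ Z ◁ (𝟙 A ⊗≫ (j ▷ A) ⊗≫ (A ◁ d) ⊗≫ (q ▷ B) ⊗≫ (A ◁ p)) ⊗≫ 𝟙 _)
      (by bicategory) ?_
    rw [h.2.2.2.2.2.2]; bicategory

/-- Each wreath axiom is the corresponding family axiom at the identity 1-morphism, up to
unitors. -/
lemma isWreath_of_wreathFamily (hB : IsMonad B p e) {d : B ≫ A ⟶ A ≫ B} {q : A ≫ A ⟶ A ≫ B}
    {j : 𝟙 X ⟶ A ≫ B}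
    (h : WreathFamily (postMonad hB) (postFunctor A) (famD d) (famQ q) (famJ j)) :
    IsWreath B p e A d q j := by
  refine ⟨?_, ?_, ?_, ?_, ?_, ?_, ?_⟩
  · have h : famP p (𝟙 X) ▷ A ≫ famD d (𝟙 X) =
        famD d (𝟙 X ≫ B) ≫ famD d (𝟙 X) ▷ B ≫ famP p (𝟙 X ≫ A) := h.x1 (𝟙 X)
    calc _ = 𝟙 _ ⊗≫ (famP p (𝟙 X) ▷ A ≫ famD d (𝟙 X)) ⊗≫ 𝟙 _ := by
          unfold famD famP; bicategory
      _ = _ := by rw [h]; unfold famD famP; bicategory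
  · have h : famE e (𝟙 X) ▷ A ≫ famD d (𝟙 X) =
        famE e (𝟙 X ≫ A) := h.x2 (𝟙 X)
    calc _ = 𝟙 _ ⊗≫ (famE e (𝟙 X) ▷ A ≫ famD d (𝟙 X)) ⊗≫ 𝟙 _ := by
          unfold famD famE; bicategory
      _ = _ := by rw [h]; unfold famE; bicategory
  · have h : famD d (𝟙 X) ▷ A ≫ famD d (𝟙 X ≫ A) ≫ famQ q (𝟙 X) ▷ B ≫ famP p (𝟙 X ≫ A) =
        famQ q (𝟙 X ≫ B) ≫ famD d (𝟙 X) ▷ B ≫ famP p (𝟙 X ≫ A) := h.x3 (𝟙 X)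
    calc _ = 𝟙 _ ⊗≫ (famD d (𝟙 X) ▷ A ≫ famD d (𝟙 X ≫ A) ≫ famQ q (𝟙 X) ▷ B ≫ famP p (𝟙 X ≫ A)) ⊗≫ 𝟙 _ := by
          unfold famD famQ famP; bicategory
      _ = _ := by rw [h]; unfold famD famQ famP; bicategory
  · have h : famJ j (𝟙 X ≫ B) ≫ famD d (𝟙 X) ▷ B ≫ famP p (𝟙 X ≫ A) =
        famJ j (𝟙 X) ▷ B ≫ famP p (𝟙 X ≫ A) := h.x4 (𝟙 X)
    calc _ = 𝟙 _ ⊗≫ (famJ j (𝟙 X ≫ B) ≫ famD d (𝟙 X) ▷ B ≫ famP p (𝟙 X ≫ A)) ⊗≫ 𝟙 _ := by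
          unfold famD famJ famP; bicategory
      _ = _ := by rw [h]; unfold famJ famP; bicategory
  · have h : famQ q (𝟙 X ≫ A) ≫ famQ q (𝟙 X) ▷ B ≫ famP p (𝟙 X ≫ A) =
        famQ q (𝟙 X) ▷ A ≫ famD d (𝟙 X ≫ A) ≫ famQ q (𝟙 X) ▷ B ≫ famP p (𝟙 X ≫ A) := h.x5 (𝟙 X)
    calc _ = 𝟙 _ ⊗≫ (famQ q (𝟙 X ≫ A) ≫ famQ q (𝟙 X) ▷ B ≫ famP p (𝟙 X ≫ A)) ⊗≫ 𝟙 _ := by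
          unfold famQ famP; bicategory
      _ = _ := by rw [h]; unfold famD famQ famP; bicategory
  · have h : famJ j (𝟙 X ≫ A) ≫ famQ q (𝟙 X) ▷ B ≫ famP p (𝟙 X ≫ A) =
        famE e (𝟙 X ≫ A) := h.x6 (𝟙 X)
    calc _ = 𝟙 _ ⊗≫ (famJ j (𝟙 X ≫ A) ≫ famQ q (𝟙 X) ▷ B ≫ famP p (𝟙 X ≫ A)) ⊗≫ 𝟙 _ := by
          unfold famQ famJ famP; bicategory
      _ = _ := by rw [h]; unfold famE; bicategory
  · have h : famJ j (𝟙 X) ▷ A ≫ famD d (𝟙 X ≫ A) ≫ famQ q (𝟙 X) ▷ B ≫ famP p (𝟙 X ≫ A) =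
        famE e (𝟙 X ≫ A) := h.x7 (𝟙 X)
    calc _ = 𝟙 _ ⊗≫ (famJ j (𝟙 X) ▷ A ≫ famD d (𝟙 X ≫ A) ≫ famQ q (𝟙 X) ▷ B ≫ famP p (𝟙 X ≫ A)) ⊗≫ 𝟙 _ := by
          unfold famD famQ famJ famP; bicategory
      _ = _ := by rw [h]; unfold famE; bicategory

lemma famD_eq (t : A ≫ B ≫ A ⟶ A ≫ B) (k : 𝟙 X ⟶ A ≫ B) (p : B ≫ B ⟶ B) :
    famD (𝟙 (B ≫ A) ⊗≫ (k ▷ (B ≫ A)) ⊗≫ (A ◁ (p ▷ A)) ⊗≫ t) =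
      fun Z => (famJ k Z ▷ B ≫ famP p (Z ≫ A)) ▷ A ≫ famT t Z := by
  funext Z
  unfold famD famJ famP famT
  bicategory

lemma famQ_eq (t : A ≫ B ≫ A ⟶ A ≫ B) (e : 𝟙 X ⟶ B) :
    famQ (𝟙 (A ≫ A) ⊗≫ (A ◁ (e ▷ A)) ⊗≫ t) =
      fun Z => famE e (Z ≫ A) ▷ A ≫ famT t Z := by
  funext Z
  unfold famQ famE famT
  bicategory

lemma famT_eq (d : B ≫ A ⟶ A ≫ B) (q : A ≫ A ⟶ A ≫ B) (p : B ≫ B ⟶ B) :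
    famT (𝟙 (A ≫ B ≫ A) ⊗≫ (A ◁ d) ⊗≫ (q ▷ B) ⊗≫ (A ◁ p)) =
      fun Z => famD d (Z ≫ A) ≫ famQ q Z ▷ B ≫ famP p (Z ≫ A) := by
  funext Z
  unfold famT famD famQ famP
  bicategory

end Action

/-- The assignments
`(t, k) ↦ (t ∘ (A ◁ p ▷ A) ∘ (k ▷ (B ≫ A)), t ∘ (A ◁ e ▷ A), k)` and
`(d, q, j) ↦ ((A ◁ p) ∘ (q ▷ B) ∘ (A ◁ d), j)` are mutually inverse, giving a
one-to-one correspondence between warpings from `(X, B)` to `A` and wreaths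
from `(X, B)` to `A`. -/
theorem warping_equiv_wreath {X : C} (B A : X ⟶ X)
    (p : B ≫ B ⟶ B) (e : 𝟙 X ⟶ B) (hB : IsMonad B p e) :
    ∃ Φ : {tk : (A ≫ B ≫ A ⟶ A ≫ B) × (𝟙 X ⟶ A ≫ B) //
            IsWarping B p e A tk.1 tk.2} ≃
          {dqj : (B ≫ A ⟶ A ≫ B) × (A ≫ A ⟶ A ≫ B) × (𝟙 X ⟶ A ≫ B) //
            IsWreath B p e A dqj.1 dqj.2.1 dqj.2.2},
      (∀ tk, (Φ tk).val.1
            = 𝟙 (B ≫ A) ⊗≫ (tk.val.2 ▷ (B ≫ A)) ⊗≫ (A ◁ (p ▷ A)) ⊗≫ tk.val.1 ∧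
          (Φ tk).val.2.1 = 𝟙 (A ≫ A) ⊗≫ (A ◁ (e ▷ A)) ⊗≫ tk.val.1 ∧
          (Φ tk).val.2.2 = tk.val.2) ∧
      (∀ dqj, (Φ.symm dqj).val.1
            = 𝟙 (A ≫ B ≫ A) ⊗≫ (A ◁ dqj.val.1) ⊗≫ (dqj.val.2.1 ▷ B) ⊗≫ (A ◁ p) ∧
          (Φ.symm dqj).val.2 = dqj.val.2.2) := by
  refine ⟨{
    toFun := fun tk => ⟨(𝟙 (B ≫ A) ⊗≫ (tk.val.2 ▷ (B ≫ A)) ⊗≫ (A ◁ (p ▷ A)) ⊗≫ tk.val.1,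
      𝟙 (A ≫ A) ⊗≫ (A ◁ (e ▷ A)) ⊗≫ tk.val.1, tk.val.2), ?_⟩
    invFun := fun dqj => ⟨(𝟙 (A ≫ B ≫ A) ⊗≫ (A ◁ dqj.val.1) ⊗≫ (dqj.val.2.1 ▷ B) ⊗≫ (A ◁ p),
      dqj.val.2.2), ?_⟩
    left_inv := ?_
    right_inv := ?_ }, fun _ => ⟨rfl, rfl, rfl⟩, fun _ => ⟨rfl, rfl⟩⟩
  · apply isWreath_of_wreathFamily hB
    rw [famD_eq, famQ_eq]
    exact (warpingFamily_of_isWarping hB tk.2).toWreathFamily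
  · apply isWarping_of_warpingFamily hB
    rw [famT_eq]
    exact (wreathFamily_of_isWreath hB dqj.2).toWarpingFamily (famQ_nat _) (famJ_nat _)
  · rintro ⟨⟨t, k⟩, h⟩
    refine Subtype.ext (Prod.ext (famT_injective ?_) rfl)
    dsimp only
    rw [famT_eq, famD_eq, famQ_eq]
    exact funext (warpingFamily_of_isWarping hB h).d_comp_kext_q
  · rintro ⟨⟨d, q, j⟩, h⟩
    refine Subtype.ext (Prod.ext (famD_injective ?_) (Prod.ext (famQ_injective ?_) rfl))
    · dsimp only
      rw [famD_eq, famT_eq]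
      exact funext (wreathFamily_of_isWreath hB h).d_eq
    · dsimp only
      rw [famQ_eq, famT_eq]
      exact funext (wreathFamily_of_isWreath hB h).q_eq
end

section
/- Let C be a category, (T̂, η, μ) a monad on C, and a an object of C. There is a bijection between (1) Eilenberg–Moore algebra structures on a, i.e. morphisms α : T̂.obj a ⟶ a with η.app a ≫ α = 𝟙 a and μ.app a ≫ α = T̂.map α ≫ α, and (2) families of functions E_x : (x ⟶ T̂.obj a) → (x ⟶ a), one for every object x of C, which are natural in x (E (h ≫ g) = h ≫ E g for all h : x' ⟶ x and g : x ⟶ T̂.obj a) and satisfy E (η.app a) = 𝟙 a and E (f ≫ T̂.map g ≫ μ.app a) = E (f ≫ T̂.map (E g)) for all f : x ⟶ T̂.obj y and g : y ⟶ T̂.obj a. The bijection sends α to the family E g := g ≫ α, and sends a family E to the morphism α := E (𝟙 (T̂.obj a)); these assignments are mutually inverse. -/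
/-!
By the Yoneda lemma a family `E_x : (x ⟶ M a) → (x ⟶ a)` natural in `x` is postcomposition
with `α = E (𝟙 (M a))`, so only the axioms need to be matched. The unit laws coincide.
Kleisli compatibility for `E g = g ≫ α` is associativity of `α` precomposed with `f ≫ M.map g`,
and conversely associativity is the instance `f = 𝟙`, `g = 𝟙`.
-/

open CategoryTheory

universe v u

variable {C : Type u} [Category.{v} C]

/-- An Eilenberg–Moore algebra structure on `a` for the monad `M`. -/
def IsEMAlgebra (M : Monad C) (a : C) (α : M.obj a ⟶ a) : Prop :=
  M.η.app a ≫ α = 𝟙 a ∧ M.μ.app a ≫ α = M.map α ≫ α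

/-- An extension-operator algebra structure on `a` for the monad `M`
(an algebra for the corresponding mw-monad/warping): a family of functions
`E_x : (x ⟶ M.obj a) → (x ⟶ a)`, natural in `x`, preserving the unit and
compatible with Kleisli extension. -/
def IsExtAlgebra (M : Monad C) (a : C)
    (E : ∀ x : C, (x ⟶ M.obj a) → (x ⟶ a)) : Prop :=
  (∀ {x' x : C} (h : x' ⟶ x) (g : x ⟶ M.obj a), E x' (h ≫ g) = h ≫ E x g) ∧
  (E a (M.η.app a) = 𝟙 a) ∧
  (∀ {x y : C} (f : x ⟶ M.obj y) (g : y ⟶ M.obj a),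
    E x (f ≫ M.map g ≫ M.μ.app a) = E x (f ≫ M.map (E y g)))

/-- For a monad `(T̂, η, μ)` on `C` and an object `a`, the maps
`α ↦ (E := fun g => g ≫ α)` and `E ↦ (α := E (𝟙 (T̂.obj a)))` are mutually
inverse and exchange Eilenberg–Moore algebra structures on `a` with natural
extension-operator families; hence the two kinds of structure are in bijection. -/
theorem emAlgebra_equiv_extAlgebra (M : Monad C) (a : C) :
    (∀ α : M.obj a ⟶ a, IsEMAlgebra M a α →
      IsExtAlgebra M a (fun _ g => g ≫ α)) ∧
    (∀ E : ∀ x : C, (x ⟶ M.obj a) → (x ⟶ a), IsExtAlgebra M a E →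
      IsEMAlgebra M a (E (M.obj a) (𝟙 (M.obj a)))) ∧
    (∀ α : M.obj a ⟶ a, IsEMAlgebra M a α →
      𝟙 (M.obj a) ≫ α = α) ∧
    (∀ E : ∀ x : C, (x ⟶ M.obj a) → (x ⟶ a), IsExtAlgebra M a E →
      ∀ (x : C) (g : x ⟶ M.obj a), g ≫ E (M.obj a) (𝟙 (M.obj a)) = E x g) := by
  refine ⟨?_, ?_, fun α _ => Category.id_comp α, ?_⟩
  · rintro α ⟨hη, hμ⟩
    refine ⟨fun h g => Category.assoc _ _ _, hη, fun f g => ?_⟩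
    simp only [Category.assoc, Functor.map_comp, hμ]
  · rintro E ⟨hnat, hη, hext⟩
    refine ⟨?_, ?_⟩
    · rw [← hnat, Category.comp_id]
      exact hη
    · -- Kleisli compatibility at `f = 𝟙 (M (M a))`, `g = 𝟙 (M a)` is associativity.
      have h := hext (𝟙 (M.obj (M.obj a))) (𝟙 (M.obj a))
      rw [Category.id_comp, Category.id_comp, M.map_id (M.obj a), Category.id_comp] at h
      rw [← hnat, ← hnat, Category.comp_id, Category.comp_id]
      exact h
  · rintro E ⟨hnat, -, -⟩ x g
    rw [← hnat, Category.comp_id]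
end
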